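/- arXiv:1305.4719 — 2 statements merged into one kernel-verified Lean document; each statement's English description precedes it below -/
import Mathlib

section
/- First-order tail estimate for the skewed combination (display (1.10)/(1stNdOr)): there exist K > 0 and w₀ > 0 such that for all w ≥ w₀, |w·(P(U ≥ V and M·U + G·V ≥ w) − C·M^Y/(Y·w^Y))| ≤ K·(w^{1−2Y} + w^{−Y}); in particular w·(P(U ≥ V, M·U + G·V ≥ w) − C·M^Y/(Y·w^Y)) = O(w^{1−2Y}) + O(w^{−Y}) as w → ∞. -/
open MeasureTheory ProbabilityTheory Filter Topology Asymptotics Set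

/-- integrand on the rotated ray -/
noncomputable def ray (κ Y x θ s : ℝ) : ℂ :=
  Complex.exp (-(Complex.I * θ)) *
    Complex.exp (-(Complex.I * x * s * Complex.exp (-(Complex.I * θ)))
      + κ * ((s ^ Y : ℝ) : ℂ) * Complex.exp (-(Complex.I * Y * (Real.pi / 2 + θ))))

lemma norm_ray (κ Y x θ s : ℝ) : ‖ray κ Y x θ s‖ =
    Real.exp (-(x * s * Real.sin θ) + κ * s ^ Y * Real.cos (Y * (Real.pi / 2 + θ))) := by
  have h1 : Complex.exp (-(Complex.I * θ)) = Real.cos θ - Real.sin θ * Complex.I := by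
    rw [show -(Complex.I * θ) = ((-θ : ℝ) : ℂ) * Complex.I by push_cast; ring, Complex.exp_mul_I]
    rw [← Complex.ofReal_cos, ← Complex.ofReal_sin]; simp; ring
  have h2 : Complex.exp (-(Complex.I * Y * (Real.pi / 2 + θ))) =
      Real.cos (Y * (Real.pi / 2 + θ)) - Real.sin (Y * (Real.pi / 2 + θ)) * Complex.I := by
    rw [show -(Complex.I * Y * (Real.pi / 2 + θ)) = ((-(Y * (Real.pi / 2 + θ)) : ℝ) : ℂ) * Complex.I by push_cast; ring,
      Complex.exp_mul_I]
    rw [← Complex.ofReal_cos, ← Complex.ofReal_sin]; simp; ring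
  have h3 : ‖Complex.exp (-(Complex.I * θ))‖ = 1 := by
    rw [Complex.norm_exp]; simp
  rw [ray, norm_mul, h3, one_mul, Complex.norm_exp, h1, h2]
  congr 1
  simp [-Complex.ofReal_cos, -Complex.ofReal_sin]

lemma ray_hasDerivAt_theta (κ Y x θ s : ℝ) :
    HasDerivAt (fun θ => ray κ Y x θ s)
      (-Complex.I * (1 + (-(Complex.I * x * s * Complex.exp (-(Complex.I * θ)))
      + κ * Y * ((s ^ Y : ℝ) : ℂ) * Complex.exp (-(Complex.I * Y * (Real.pi / 2 + θ))))) * ray κ Y x θ s) θ := by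
  have h0 : HasDerivAt (fun θ : ℝ => (θ : ℂ)) 1 θ := Complex.ofRealCLM.hasDerivAt
  have h1 := ((h0.const_mul Complex.I).neg).cexp
  have h2 := (((h0.const_add (Real.pi / 2 : ℂ)).const_mul (Complex.I * Y)).neg).cexp
  have h3 := ((h1.const_mul (Complex.I * x * s)).neg.add (h2.const_mul (κ * ((s ^ Y : ℝ) : ℂ)))).cexp
  have h4 := h1.mul h3
  refine h4.congr_deriv ?_
  simp only [ray, Pi.neg_apply, Pi.add_apply]
  ring_nf

lemma ray_hasDerivAt_s (κ Y x θ s : ℝ) (hs : 0 < s) :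
    HasDerivAt (fun s : ℝ => -Complex.I * (s : ℂ) * ray κ Y x θ s)
      (-Complex.I * (1 + (-(Complex.I * x * s * Complex.exp (-(Complex.I * θ)))
      + κ * Y * ((s ^ Y : ℝ) : ℂ) * Complex.exp (-(Complex.I * Y * (Real.pi / 2 + θ))))) * ray κ Y x θ s) s := by
  have h0 : HasDerivAt (fun θ : ℝ => (θ : ℂ)) 1 s := Complex.ofRealCLM.hasDerivAt
  have h1 := (Real.hasDerivAt_rpow_const (p := Y) (Or.inl hs.ne')).ofReal_comp
  have h2 := ((((h0.const_mul (Complex.I * x)).mul_const (Complex.exp (-(Complex.I * θ)))).neg.add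
    ((h1.const_mul (κ : ℂ)).mul_const (Complex.exp (-(Complex.I * Y * (Real.pi / 2 + θ)))))).cexp).const_mul
      (Complex.exp (-(Complex.I * θ)))
  have h3 := (h0.const_mul (-Complex.I)).mul h2
  refine h3.congr_deriv ?_
  have : s ^ Y = s ^ (Y - 1) * s := by
    rw [Real.rpow_sub_one hs.ne']; field_simp
  simp only [ray, Pi.neg_apply, Pi.add_apply]
  rw [this]
  push_cast
  ring_nf

/-- invariance of a ray integral under rotation -/
lemma rot_const (F F' : ℝ → ℝ → ℂ) (a b A p c : ℝ) (hp : 0 ≤ p) (hc : 0 < c)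
    (h1 : ∀ θ ∈ Ioo a b, ∀ s > 0, HasDerivAt (fun θ => F θ s) (F' θ s) θ)
    (h2 : ∀ θ ∈ Ioo a b, ∀ s > 0, HasDerivAt (fun s : ℝ => -Complex.I * (s : ℂ) * F θ s) (F' θ s) s)
    (hF : ∀ θ ∈ Ioo a b, ∀ s > 0, ‖F θ s‖ ≤ A * (s ^ p * Real.exp (-c * s)))
    (hF' : ∀ θ ∈ Ioo a b, ∀ s > 0, ‖F' θ s‖ ≤ A * ((1 + s + s ^ 2) * (s ^ p * Real.exp (-c * s))))
    (hm : ∀ θ ∈ Ioo a b, ContinuousOn (F θ) (Ioi 0))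
    (hm' : ∀ θ ∈ Ioo a b, ContinuousOn (F' θ) (Ioi 0))
    {θ₁ θ₂ : ℝ} (ht1 : θ₁ ∈ Ioo a b) (ht2 : θ₂ ∈ Ioo a b) :
    ∫ s in Ioi 0, F θ₁ s = ∫ s in Ioi 0, F θ₂ s := by
  have hIntg : ∀ q : ℝ, 0 ≤ q → IntegrableOn (fun s : ℝ => s ^ q * Real.exp (-c * s)) (Ioi 0) := by
    intro q hq
    simpa using integrableOn_rpow_mul_exp_neg_mul_rpow (p := 1) (s := q) (b := c) (by linarith) one_pos hc
  have hb0 : IntegrableOn (fun s : ℝ => A * (s ^ p * Real.exp (-c * s))) (Ioi 0) :=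
    (hIntg p hp).const_mul A
  have hb1 : IntegrableOn (fun s : ℝ => A * ((1 + s + s ^ 2) * (s ^ p * Real.exp (-c * s)))) (Ioi 0) := by
    refine Integrable.const_mul ?_ A
    refine (((hIntg p hp).add (hIntg (p+1) (by linarith))).add (hIntg (p+2) (by linarith))).congr ?_
    filter_upwards [ae_restrict_mem measurableSet_Ioi] with s hs
    have hs' : (0:ℝ) < s := hs
    simp only [Pi.add_apply]
    rw [Real.rpow_add hs', Real.rpow_add hs', Real.rpow_one, Real.rpow_two]
    ring
  have hzero : ∀ θ ∈ Ioo a b, ∫ s in Ioi 0, F' θ s = 0 := by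
    intro θ hθ
    have hF'i : IntegrableOn (F' θ) (Ioi 0) := by
      refine Integrable.mono' hb1 ((hm' θ hθ).aestronglyMeasurable measurableSet_Ioi) ?_
      filter_upwards [ae_restrict_mem measurableSet_Ioi] with s hs using hF' θ hθ s hs
    have hnorm : ∀ s : ℝ, s > 0 → ‖-Complex.I * (s : ℂ) * F θ s‖ ≤ A * (s ^ (p + 1) * Real.exp (-c * s)) := by
      intro s hs
      rw [norm_mul, norm_mul, norm_neg, Complex.norm_I, one_mul, Complex.norm_real, Real.norm_of_nonneg hs.le,
        Real.rpow_add hs, Real.rpow_one]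
      have := mul_le_mul_of_nonneg_left (hF θ hθ s hs) hs.le
      linarith
    have := integral_Ioi_of_hasDerivAt_of_tendsto (f := fun s : ℝ => -Complex.I * (s : ℂ) * F θ s)
      (f' := F' θ) (a := 0) (m := 0) ?_ (fun s hs => h2 θ hθ s hs) hF'i ?_
    · simpa using this
    · rw [ContinuousWithinAt]
      have h0 : Tendsto (fun s : ℝ => A * (s ^ (p + 1) * Real.exp (-c * s))) (𝓝[≥] 0) (𝓝 0) := by
        have : Continuous (fun s : ℝ => A * (s ^ (p + 1) * Real.exp (-c * s))) := by
          have := Real.continuous_rpow_const (q := p + 1) (by linarith)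
          fun_prop
        have h := this.tendsto 0
        rw [Real.zero_rpow (by linarith)] at h
        simp only [zero_mul, mul_zero] at h
        exact h.mono_left nhdsWithin_le_nhds
      simp only [Complex.ofReal_zero, mul_zero, zero_mul]
      refine squeeze_zero_norm' ?_ h0
      filter_upwards [self_mem_nhdsWithin] with s hs
      rcases eq_or_lt_of_le (show (0:ℝ) ≤ s from hs) with h | h
      · rw [← h, Real.zero_rpow (by linarith)]; simp
      · exact hnorm s h
    · have h0 : Tendsto (fun s : ℝ => A * (s ^ (p + 1) * Real.exp (-c * s))) atTop (𝓝 0) := by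
        simpa using (tendsto_rpow_mul_exp_neg_mul_atTop_nhds_zero (p + 1) c hc).const_mul A
      refine squeeze_zero_norm' ?_ h0
      filter_upwards [eventually_gt_atTop 0] with s hs using hnorm s hs
  have hder : ∀ θ ∈ Ioo a b, HasDerivAt (fun θ => ∫ s in Ioi 0, F θ s) 0 θ := by
    intro θ hθ
    have := hasDerivAt_integral_of_dominated_loc_of_deriv_le (μ := volume.restrict (Ioi (0:ℝ)))
      (F := F) (F' := F') (x₀ := θ) (s := Ioo a b) (bound := fun s : ℝ => A * ((1 + s + s ^ 2) * (s ^ p * Real.exp (-c * s))))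
      (Ioo_mem_nhds hθ.1 hθ.2) ?_ ?_ ?_ ?_ hb1 ?_
    · rw [← hzero θ hθ]; exact this.2
    · filter_upwards [Ioo_mem_nhds hθ.1 hθ.2] with t ht
      exact (hm t ht).aestronglyMeasurable measurableSet_Ioi
    · refine Integrable.mono' hb0 ((hm θ hθ).aestronglyMeasurable measurableSet_Ioi) ?_
      filter_upwards [ae_restrict_mem measurableSet_Ioi] with s hs using hF θ hθ s hs
    · exact (hm' θ hθ).aestronglyMeasurable measurableSet_Ioi
    · filter_upwards [ae_restrict_mem measurableSet_Ioi] with s hs t ht using hF' t ht s hs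
    · filter_upwards [ae_restrict_mem measurableSet_Ioi] with s hs t ht using h1 t ht s hs
  exact isOpen_Ioo.is_const_of_deriv_eq_zero isPreconnected_Ioo
    (fun θ hθ => (hder θ hθ).differentiableAt.differentiableWithinAt)
    (fun θ hθ => (hder θ hθ).deriv) ht1 ht2

lemma norm_exp_negI (θ : ℝ) : ‖Complex.exp (-(Complex.I * θ))‖ = 1 := by
  rw [Complex.norm_exp]; simp

lemma norm_exp_rot (x θ s : ℝ) :
    ‖Complex.exp (-(Complex.I * x * s * Complex.exp (-(Complex.I * θ))))‖ =
      Real.exp (-(x * s * Real.sin θ)) := by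
  have h1 : Complex.exp (-(Complex.I * θ)) = Real.cos θ - Real.sin θ * Complex.I := by
    rw [show -(Complex.I * θ) = ((-θ : ℝ) : ℂ) * Complex.I by push_cast; ring, Complex.exp_mul_I]
    rw [← Complex.ofReal_cos, ← Complex.ofReal_sin]; simp; ring
  rw [Complex.norm_exp, h1]
  congr 1
  simp [-Complex.ofReal_cos, -Complex.ofReal_sin]

lemma gamma_ray (a x θ : ℝ) (ha : 0 ≤ a) (hx : 0 < x) (hθ : θ ∈ Ioo 0 Real.pi) :
    ∫ s in Ioi (0:ℝ), Complex.exp (-(Complex.I * (a + 1) * θ)) * (((s ^ a : ℝ) : ℂ) *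
      Complex.exp (-(Complex.I * x * s * Complex.exp (-(Complex.I * θ))))) =
    Complex.exp (-(Complex.I * (a + 1) * (Real.pi / 2))) * ((Real.Gamma (a + 1) * x ^ (-(a+1)) : ℝ) : ℂ) := by
  set F : ℝ → ℝ → ℂ := fun θ s => Complex.exp (-(Complex.I * (a + 1) * θ)) * (((s ^ a : ℝ) : ℂ) *
      Complex.exp (-(Complex.I * x * s * Complex.exp (-(Complex.I * θ))))) with hFdef
  set F' : ℝ → ℝ → ℂ := fun θ s =>
    -Complex.I * (a + 1 - Complex.I * x * s * Complex.exp (-(Complex.I * θ))) * F θ s with hF'def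
  have hpi := Real.pi_pos
  obtain ⟨l, hl0, hl1, hl2⟩ : ∃ l : ℝ, 0 < l ∧ l < θ ∧ l < Real.pi / 2 :=
    ⟨min θ (Real.pi / 2) / 2, by have := hθ.1; positivity,
      by have := min_le_left θ (Real.pi/2); have := lt_min hθ.1 (half_pos hpi); linarith,
      by have := min_le_right θ (Real.pi/2); have := lt_min hθ.1 (half_pos hpi); linarith⟩
  obtain ⟨u, hu0, hu1, hu2⟩ : ∃ u : ℝ, u < Real.pi ∧ θ < u ∧ Real.pi / 2 < u := by
    obtain ⟨u, h1, h2⟩ := exists_between (max_lt hθ.2 (show Real.pi / 2 < Real.pi by linarith))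
    exact ⟨u, h2, lt_of_le_of_lt (le_max_left _ _) h1, lt_of_le_of_lt (le_max_right _ _) h1⟩
  obtain ⟨m, hm0, hm⟩ : ∃ m > 0, ∀ t ∈ Ioo l u, m ≤ Real.sin t := by
    obtain ⟨t0, ht0, hmin⟩ := (isCompact_Icc (a := l) (b := u)).exists_isMinOn ⟨l, by constructor <;> linarith⟩
      Real.continuous_sin.continuousOn
    exact ⟨Real.sin t0, Real.sin_pos_of_pos_of_lt_pi (by linarith [ht0.1]) (by linarith [ht0.2]),
      fun t ht => hmin (Ioo_subset_Icc_self ht)⟩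
  have hn1 : ∀ θ : ℝ, ‖Complex.exp (-(Complex.I * (a + 1) * θ))‖ = 1 := by
    intro θ; rw [Complex.norm_exp]; simp
  have hFn : ∀ θ ∈ Ioo l u, ∀ s > 0, ‖F θ s‖ ≤ s ^ a * Real.exp (-(x * m) * s) := by
    intro t ht s hs
    simp only [hFdef]
    rw [norm_mul, hn1, one_mul, norm_mul, norm_exp_rot, Complex.norm_real,
      Real.norm_of_nonneg (by positivity)]
    gcongr
    have := mul_le_mul_of_nonneg_left (hm t ht) (mul_pos hx hs).le
    linarith
  have hcont : ∀ θ, Continuous (F θ) := by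
    intro t
    have := Real.continuous_rpow_const (q := a) ha
    simp only [hFdef]
    fun_prop
  have hconst := rot_const F F' l u (a + 1 + x) a (x * m) ha (mul_pos hx hm0) ?_ ?_ ?_ ?_ ?_ ?_
    (θ₁ := θ) (θ₂ := Real.pi / 2) ⟨hl1, hu1⟩ ⟨hl2, hu2⟩
  · rw [hconst]
    have hg := Real.integral_rpow_mul_exp_neg_mul_Ioi (a := a + 1) (r := x) (by linarith) hx
    have : ∀ s : ℝ, F (Real.pi / 2) s =
      Complex.exp (-(Complex.I * (a + 1) * (Real.pi / 2))) * ((s ^ (a + 1 - 1) * Real.exp (-(x * s)) : ℝ) : ℂ) := by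
      intro s
      have h : Complex.exp (-(Complex.I * ((Real.pi / 2 : ℝ) : ℂ))) = -Complex.I := by
        rw [show -(Complex.I * ((Real.pi / 2 : ℝ) : ℂ)) = ((-(Real.pi / 2) : ℝ) : ℂ) * Complex.I by push_cast; ring, Complex.exp_mul_I]
        rw [← Complex.ofReal_cos, ← Complex.ofReal_sin]; simp
      simp only [hFdef]
      rw [h]
      push_cast
      rw [show -(Complex.I * x * s * -Complex.I) = -(x * s : ℂ) by
        linear_combination (x * s : ℂ) * Complex.I_sq]
      simp
    simp_rw [this]
    rw [integral_const_mul, integral_complex_ofReal, hg]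
    congr 2
    rw [one_div, Real.inv_rpow hx.le, Real.rpow_neg hx.le]; ring
  · intro t ht s hs
    have h0 : HasDerivAt (fun θ : ℝ => (θ : ℂ)) 1 t := Complex.ofRealCLM.hasDerivAt
    have h1 := ((h0.const_mul Complex.I).neg).cexp
    have h2 := ((h1.const_mul (Complex.I * x * s)).neg).cexp.const_mul (((s ^ a : ℝ) : ℂ))
    have h3 := ((h0.const_mul (Complex.I * (a+1))).neg).cexp.mul h2
    refine h3.congr_deriv ?_
    simp only [hF'def, hFdef, Pi.neg_apply]
    ring_nf
  · intro t ht s hs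
    have h0 : HasDerivAt (fun θ : ℝ => (θ : ℂ)) 1 s := Complex.ofRealCLM.hasDerivAt
    have h1 := (Real.hasDerivAt_rpow_const (p := a) (Or.inl (ne_of_gt hs))).ofReal_comp
    have h2 := (h1.mul (((h0.const_mul (Complex.I * x)).mul_const (Complex.exp (-(Complex.I * t)))).neg.cexp)).const_mul
      (Complex.exp (-(Complex.I * (a + 1) * t)))
    have h3 := (h0.const_mul (-Complex.I)).mul h2
    refine h3.congr_deriv ?_
    have : s ^ a = s ^ (a - 1) * s := by
      rw [Real.rpow_sub_one (ne_of_gt hs)]; field_simp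
    simp only [hF'def, hFdef, Pi.neg_apply, Pi.mul_apply]
    rw [this]
    push_cast
    ring_nf
  · intro t ht s hs
    refine (hFn t ht s hs).trans ?_
    have : 0 ≤ s ^ a * Real.exp (-(x * m) * s) := by positivity
    nlinarith
  · intro t ht s hs
    have h0 : 0 ≤ s ^ a * Real.exp (-(x * m) * s) := by positivity
    simp only [hF'def]
    rw [norm_mul, norm_mul, norm_neg, Complex.norm_I, one_mul, ← mul_assoc]
    refine mul_le_mul ?_ (hFn t ht s hs) (norm_nonneg _) (by positivity)
    refine (norm_sub_le _ _).trans ?_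
    rw [norm_mul, norm_exp_negI, norm_mul, norm_mul, Complex.norm_I, Complex.norm_real, Complex.norm_real,
      show (a + 1 : ℂ) = ((a + 1 : ℝ) : ℂ) by push_cast; rfl, Complex.norm_real, Real.norm_of_nonneg hx.le,
      Real.norm_of_nonneg hs.le, Real.norm_of_nonneg (by linarith)]
    have : 0 < x * s := mul_pos hx hs
    have hs' : 0 < s := hs
    nlinarith [mul_nonneg ha hs'.le, mul_nonneg ha (sq_nonneg s), mul_nonneg hx.le (sq_nonneg s)]
  · intro t _; exact (hcont t).continuousOn
  · intro t _
    have := hcont t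
    refine Continuous.continuousOn ?_
    simp only [hF'def]
    fun_prop

lemma norm_exp_sub_one_le_of_re {z : ℂ} (hz : z.re ≤ 0) : ‖Complex.exp z - 1‖ ≤ ‖z‖ := by
  have := Convex.norm_image_sub_le_of_norm_hasDerivWithin_le (f := Complex.exp) (f' := Complex.exp)
    (s := {w : ℂ | w.re ≤ 0}) (x := 0) (y := z) (C := 1)
    (fun w _ => (Complex.hasDerivAt_exp w).hasDerivWithinAt)
    (fun w hw => by rw [Complex.norm_exp]; exact Real.exp_le_one_iff.2 hw)
    (convex_halfSpace_re_le 0) (by simp) hz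
  simpa using this

lemma norm_exp_sub_one_sub_le_of_re {z : ℂ} (hz : z.re ≤ 0) :
    ‖Complex.exp z - 1 - z‖ ≤ 2 * ‖z‖ ^ 2 := by
  rcases le_total ‖z‖ 1 with h | h
  · have := Complex.norm_exp_sub_one_sub_id_le h
    nlinarith [sq_nonneg ‖z‖]
  · have h1 := norm_exp_sub_one_le_of_re hz
    have := norm_sub_le (Complex.exp z - 1) z
    nlinarith

lemma exists_delta (Y : ℝ) (hY : Y ∈ Ioo (1:ℝ) 2) :
    ∃ δ > 0, δ < Real.pi / 2 ∧ ∃ c > 0, ∀ θ ∈ Ioo (-(2*δ)) (2*δ),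
      Real.cos (Y * (Real.pi / 2 + θ)) ≤ -c := by
  have hpi := Real.pi_pos
  obtain ⟨h1, h2⟩ := hY
  set d := Real.pi * (Y - 1) / 8 with hd
  have hd0 : 0 < d := by have : 0 < Y - 1 := by linarith
                         positivity
  have hd1 : 8 * d < Real.pi := by rw [hd]; nlinarith
  have hYd : Y * (2 * d) < 2 * (2 * d) := by nlinarith
  have e1 : Real.pi / 2 < Y * (Real.pi / 2 - 2 * d) := by nlinarith
  have e2 : Y * (Real.pi / 2 + 2 * d) < 3 * Real.pi / 2 := by nlinarith
  refine ⟨d, hd0, by linarith, ?_⟩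
  obtain ⟨t0, ht0, hmax⟩ := (isCompact_Icc (a := -(2*d)) (b := 2*d)).exists_isMaxOn
      ⟨0, by constructor <;> linarith⟩
      (show Continuous fun θ : ℝ => Real.cos (Y * (Real.pi / 2 + θ)) by fun_prop).continuousOn
  refine ⟨-Real.cos (Y * (Real.pi / 2 + t0)), ?_, ?_⟩
  · have := Real.cos_neg_of_pi_div_two_lt_of_lt (x := Y * (Real.pi / 2 + t0))
      (by nlinarith [ht0.1]) (by nlinarith [ht0.2])
    linarith
  · intro θ hθ
    have := hmax (Ioo_subset_Icc_self hθ)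
    simpa using this

lemma exists_lin_bound (Y c a : ℝ) (hY : 1 < Y) (hc : 0 < c) (ha : 0 ≤ a) :
    ∃ B : ℝ, ∀ s > 0, a * s ≤ c * s ^ Y + B := by
  refine ⟨a * (a / c) ^ (1 / (Y - 1)), fun s hs => ?_⟩
  have hY1 : 0 < Y - 1 := by linarith
  rcases le_total (a / c) (s ^ (Y - 1)) with h | h
  · have h1 : a ≤ c * s ^ (Y - 1) := by rw [div_le_iff₀ hc] at h; linarith
    have h2 : s ^ Y = s ^ (Y - 1) * s := by
      rw [Real.rpow_sub_one (ne_of_gt hs)]; field_simp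
    have h3 : 0 ≤ a * (a / c) ^ (1 / (Y - 1)) := by positivity
    rw [h2]
    nlinarith [mul_le_mul_of_nonneg_right h1 (le_of_lt hs)]
  · have h1 : s ≤ (a / c) ^ (1 / (Y - 1)) := by
      calc s = (s ^ (Y - 1)) ^ (1 / (Y - 1)) := by
            rw [← Real.rpow_mul (le_of_lt hs), mul_one_div_cancel hY1.ne', Real.rpow_one]
        _ ≤ _ := Real.rpow_le_rpow (by positivity) h (by positivity)
    have : 0 ≤ c * s ^ Y := by positivity
    nlinarith [mul_le_mul_of_nonneg_left h1 ha]

lemma norm_exp_negIY (Y θ : ℝ) : ‖Complex.exp (-(Complex.I * Y * (Real.pi / 2 + θ)))‖ = 1 := by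
  rw [Complex.norm_exp]; simp

lemma continuous_ray (κ Y x θ : ℝ) (hY : 0 ≤ Y) : Continuous (ray κ Y x θ) := by
  have := Real.continuous_rpow_const (q := Y) hY
  unfold ray
  fun_prop

lemma ray_rot (κ Y x δ c : ℝ) (hκ : 0 < κ) (hY : Y ∈ Ioo (1:ℝ) 2) (hδ : 0 < δ) (hc : 0 < c)
    (hcos : ∀ θ ∈ Ioo (-(2*δ)) (2*δ), Real.cos (Y * (Real.pi / 2 + θ)) ≤ -c)
    (θ : ℝ) (hθ : θ ∈ Ioo (-(2*δ)) (2*δ)) :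
    ∫ s in Ioi 0, ray κ Y x 0 s = ∫ s in Ioi 0, ray κ Y x θ s := by
  obtain ⟨B, hB⟩ := exists_lin_bound Y (κ * c) (|x| + 1) hY.1 (by positivity) (by positivity)
  have hn : ∀ θ ∈ Ioo (-(2*δ)) (2*δ), ∀ s > 0,
      ‖ray κ Y x θ s‖ ≤ Real.exp B * (s ^ (0:ℝ) * Real.exp (-1 * s)) := by
    intro t ht s hs
    have hs' : 0 < s := hs
    rw [norm_ray, Real.rpow_zero, one_mul, ← Real.exp_add]
    apply Real.exp_le_exp.2
    have h1 : -(x * s * Real.sin t) ≤ |x| * s := by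
      have : |x * s * Real.sin t| ≤ |x| * s := by
        rw [abs_mul, abs_mul, abs_of_pos hs']
        exact mul_le_of_le_one_right (by positivity) (Real.abs_sin_le_one t)
      linarith [neg_abs_le (x * s * Real.sin t)]
    have h2 := mul_le_mul_of_nonneg_left (hcos t ht) (show 0 ≤ κ * s ^ Y by positivity)
    have := hB s hs
    linarith
  have hYpos : 0 < Y := by linarith [hY.1]
  have hcr := Real.continuous_rpow_const (q := Y) hYpos.le
  refine rot_const (ray κ Y x) _ (-(2*δ)) (2*δ) ((1 + |x| + κ * Y) * Real.exp B) 0 1 le_rfl one_pos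
    (fun t _ s _ => ray_hasDerivAt_theta κ Y x t s)
    (fun t _ s hs => ray_hasDerivAt_s κ Y x t s hs) ?_ ?_ ?_ ?_ ⟨by linarith, by linarith⟩ hθ
  · intro t ht s hs
    refine (hn t ht s hs).trans ?_
    have h0 : 0 ≤ Real.exp B * (s ^ (0:ℝ) * Real.exp (-1 * s)) := by positivity
    have : 0 ≤ |x| + κ * Y := by positivity
    nlinarith
  · intro t ht s hs
    have hs' : 0 < s := hs
    rw [norm_mul, norm_mul, norm_neg, Complex.norm_I, one_mul]
    have key : ‖1 + (-(Complex.I * x * s * Complex.exp (-(Complex.I * t)))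
      + κ * Y * ((s ^ Y : ℝ) : ℂ) * Complex.exp (-(Complex.I * Y * (Real.pi / 2 + t))))‖ ≤
        (1 + |x| + κ * Y) * (1 + s + s ^ 2) := by
      refine (norm_add_le _ _).trans ?_
      refine (add_le_add le_rfl (norm_add_le _ _)).trans ?_
      rw [norm_neg, norm_mul, norm_exp_negI, norm_mul, norm_mul, Complex.norm_I, norm_mul, norm_exp_negIY,
        norm_mul, norm_mul, Complex.norm_real, Complex.norm_real, Complex.norm_real, Complex.norm_real,
        Complex.norm_real, Real.norm_of_nonneg hs'.le, Real.norm_of_nonneg hκ.le,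
        Real.norm_of_nonneg hYpos.le, Real.norm_of_nonneg (by positivity : 0 ≤ s ^ Y), norm_one,
        Real.norm_eq_abs]
      have h1 : s ^ Y ≤ 1 + s ^ 2 := by
        rcases le_total s 1 with h | h
        · have := Real.rpow_le_one hs'.le h hYpos.le
          nlinarith
        · have := Real.rpow_le_rpow_of_exponent_le h hY.2.le
          rw [Real.rpow_two] at this
          linarith
      have hx := abs_nonneg x
      have hkY : 0 ≤ κ * Y := by positivity
      nlinarith [mul_le_mul_of_nonneg_left h1 hkY, mul_nonneg hx hs'.le, mul_nonneg hkY hs'.le,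
        mul_nonneg hx (sq_nonneg s), mul_nonneg hkY (sq_nonneg s)]
    calc _ ≤ ((1 + |x| + κ * Y) * (1 + s + s ^ 2)) * (Real.exp B * (s ^ (0:ℝ) * Real.exp (-1 * s))) :=
          mul_le_mul key (hn t ht s hs) (norm_nonneg _) (by positivity)
      _ = _ := by ring
  · intro t _; exact (continuous_ray κ Y x t hYpos.le).continuousOn
  · intro t _
    have := continuous_ray κ Y x t hYpos.le
    refine Continuous.continuousOn ?_
    fun_prop

/-- the pure exponential on the rotated ray -/
noncomputable def er (x θ s : ℝ) : ℂ :=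
  Complex.exp (-(Complex.I * x * s * Complex.exp (-(Complex.I * θ))))

lemma ray_eq (κ Y x θ s : ℝ) : ray κ Y x θ s = Complex.exp (-(Complex.I * θ)) * (er x θ s *
    Complex.exp (κ * ((s ^ Y : ℝ) : ℂ) * Complex.exp (-(Complex.I * Y * (Real.pi / 2 + θ))))) := by
  rw [ray, er, Complex.exp_add]

lemma rpow_er_integrable (a x θ : ℝ) (ha : 0 ≤ a) (hx : 0 < x * Real.sin θ) :
    IntegrableOn (fun s : ℝ => ((s ^ a : ℝ) : ℂ) * er x θ s) (Ioi 0) := by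
  have h := integrableOn_rpow_mul_exp_neg_mul_rpow (p := 1) (s := a) (b := x * Real.sin θ) (by linarith) one_pos hx
  refine Integrable.mono' h ?_ ?_
  · refine Continuous.aestronglyMeasurable ?_
    have := Real.continuous_rpow_const (q := a) ha
    unfold er
    fun_prop
  · filter_upwards [ae_restrict_mem measurableSet_Ioi] with s hs
    have hs' : (0:ℝ) < s := hs
    rw [norm_mul, er, norm_exp_rot, Complex.norm_real, Real.norm_of_nonneg (by positivity), Real.rpow_one]
    apply le_of_eq; congr 2; ring

lemma rpow_exp_integral (a r : ℝ) (ha : 0 ≤ a) (hr : 0 < r) :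
    IntegrableOn (fun s : ℝ => s ^ a * Real.exp (-(r * s))) (Ioi 0) ∧
    ∫ s in Ioi (0:ℝ), s ^ a * Real.exp (-(r * s)) = Real.Gamma (a + 1) * r ^ (-(a+1)) := by
  constructor
  · simpa using integrableOn_rpow_mul_exp_neg_mul_rpow (p := 1) (s := a) (b := r) (by linarith) one_pos hr
  · have hg := Real.integral_rpow_mul_exp_neg_mul_Ioi (a := a + 1) (r := r) (by linarith) hr
    simp only [add_sub_cancel_right] at hg
    rw [hg, one_div, Real.inv_rpow hr.le, Real.rpow_neg hr.le]; ring

lemma er_integral (x θ : ℝ) (hx : 0 < x * Real.sin θ) :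
    Complex.exp (-(Complex.I * θ)) * ∫ s in Ioi (0:ℝ), er x θ s = -Complex.I / x := by
  have hx0 : x ≠ 0 := by rintro rfl; simp at hx
  have h1 : (-(Complex.I * x * Complex.exp (-(Complex.I * θ)))).re < 0 := by
    have := norm_exp_rot x θ 1
    rw [Complex.norm_exp, Real.exp_eq_exp] at this
    simp only [Complex.ofReal_one, mul_one] at this
    rw [this]; linarith
  have h2 := integral_exp_mul_complex_Ioi h1 0
  have h3 : ∀ s : ℝ, er x θ s = Complex.exp (-(Complex.I * x * Complex.exp (-(Complex.I * θ))) * s) := by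
    intro s; rw [er]; congr 1; ring
  simp_rw [h3]
  rw [h2]
  have : Complex.exp (-(Complex.I * θ)) ≠ 0 := Complex.exp_ne_zero _
  have hxc : (x:ℂ) ≠ 0 := by exact_mod_cast hx0
  simp only [Complex.ofReal_zero, mul_zero, Complex.exp_zero]
  field_simp
  rw [Complex.I_sq]; norm_num

/-- the exponent -/
noncomputable def zz (κ Y θ s : ℝ) : ℂ :=
  κ * ((s ^ Y : ℝ) : ℂ) * Complex.exp (-(Complex.I * Y * (Real.pi / 2 + θ)))

lemma zz_norm (κ Y θ s : ℝ) (hκ : 0 < κ) (hs : 0 < s) : ‖zz κ Y θ s‖ = κ * s ^ Y := by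
  rw [zz, norm_mul, norm_exp_negIY, norm_mul, Complex.norm_real, Complex.norm_real,
    Real.norm_of_nonneg hκ.le, Real.norm_of_nonneg (by positivity), mul_one]

lemma zz_re (κ Y θ s : ℝ) (hκ : 0 < κ) (hs : 0 < s)
    (hcos : Real.cos (Y * (Real.pi / 2 + θ)) ≤ 0) : (zz κ Y θ s).re ≤ 0 := by
  have := norm_ray κ Y 0 θ s
  rw [ray, norm_mul, norm_exp_negI, one_mul, Complex.norm_exp, Real.exp_eq_exp] at this
  simp only [Complex.ofReal_zero, mul_zero, zero_mul, neg_zero, zero_add] at this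
  rw [zz, this]
  have : 0 ≤ κ * s ^ Y := by positivity
  nlinarith

lemma norm_er (x θ s : ℝ) : ‖er x θ s‖ = Real.exp (-(x * Real.sin θ * s)) := by
  rw [er, norm_exp_rot]; congr 1; ring

lemma ray_integrable (κ Y x θ : ℝ) (hκ : 0 < κ) (hY : Y ∈ Ioo (1:ℝ) 2)
    (hcos : Real.cos (Y * (Real.pi / 2 + θ)) ≤ 0) (hx : 0 < x * Real.sin θ) :
    IntegrableOn (ray κ Y x θ) (Ioi 0) := by
  refine Integrable.mono' (rpow_exp_integral 0 _ le_rfl hx).1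
    (continuous_ray κ Y x θ (by linarith [hY.1])).aestronglyMeasurable ?_
  filter_upwards [ae_restrict_mem measurableSet_Ioi] with s hs
  have hs' : (0:ℝ) < s := hs
  rw [norm_ray, Real.rpow_zero, one_mul]
  apply Real.exp_le_exp.2
  have : 0 ≤ κ * s ^ Y := by positivity
  nlinarith

lemma J_bound1 (κ Y x θ : ℝ) (hκ : 0 < κ) (hY : Y ∈ Ioo (1:ℝ) 2)
    (hcos : Real.cos (Y * (Real.pi / 2 + θ)) ≤ 0) (hx : 0 < x * Real.sin θ) :
    |(∫ s in Ioi 0, ray κ Y x θ s).re| ≤ κ * Real.Gamma (Y + 1) * (x * Real.sin θ) ^ (-(Y+1)) := by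
  have hYpos : 0 ≤ Y := by linarith [hY.1]
  have hi0 : IntegrableOn (er x θ) (Ioi 0) := by
    simpa using rpow_er_integrable 0 x θ le_rfl hx
  obtain ⟨hi1, hi2⟩ := rpow_exp_integral Y _ hYpos hx
  have hdiff : (∫ s in Ioi 0, ray κ Y x θ s) - (-Complex.I / x) =
      ∫ s in Ioi 0, (ray κ Y x θ s - Complex.exp (-(Complex.I * θ)) * er x θ s) := by
    rw [integral_sub (ray_integrable κ Y x θ hκ hY hcos hx) (hi0.const_mul _), integral_const_mul,
      er_integral x θ hx]
  have hb : ‖∫ s in Ioi 0, (ray κ Y x θ s - Complex.exp (-(Complex.I * θ)) * er x θ s)‖ ≤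
      ∫ s in Ioi 0, κ * (s ^ Y * Real.exp (-(x * Real.sin θ * s))) := by
    refine norm_integral_le_of_norm_le (hi1.const_mul κ) ?_
    filter_upwards [ae_restrict_mem measurableSet_Ioi] with s hs
    have hs' : (0:ℝ) < s := hs
    have : ray κ Y x θ s - Complex.exp (-(Complex.I * θ)) * er x θ s =
      Complex.exp (-(Complex.I * θ)) * (er x θ s * (Complex.exp (zz κ Y θ s) - 1)) := by
      rw [ray_eq, zz]; ring
    rw [this, norm_mul, norm_exp_negI, one_mul, norm_mul, norm_er]
    have h1 := norm_exp_sub_one_le_of_re (zz_re κ Y θ s hκ hs' hcos)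
    rw [zz_norm κ Y θ s hκ hs'] at h1
    have := mul_le_mul_of_nonneg_left h1 (Real.exp_pos (-(x * Real.sin θ * s))).le
    linarith
  rw [integral_const_mul, hi2, ← hdiff] at hb
  have h := (Complex.abs_re_le_norm _).trans hb
  have h0 : (-Complex.I / (x:ℂ)).re = 0 := by simp
  rw [Complex.sub_re, h0, sub_zero] at h
  linarith

lemma J_bound2 (κ Y x θ : ℝ) (hκ : 0 < κ) (hY : Y ∈ Ioo (1:ℝ) 2)
    (hcos : Real.cos (Y * (Real.pi / 2 + θ)) ≤ 0) (hx : 0 < x) (hθ : θ ∈ Ioo 0 Real.pi) :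
    |(∫ s in Ioi 0, ray κ Y x θ s).re - κ * Real.Gamma (Y + 1) * x ^ (-(Y + 1)) * (-Real.sin (Real.pi * Y))|
      ≤ 2 * κ ^ 2 * Real.Gamma (2 * Y + 1) * (x * Real.sin θ) ^ (-(2*Y+1)) := by
  have hYpos : 0 ≤ Y := by linarith [hY.1]
  have hxs : 0 < x * Real.sin θ := mul_pos hx (Real.sin_pos_of_pos_of_lt_pi hθ.1 hθ.2)
  have hi0 : IntegrableOn (er x θ) (Ioi 0) := by
    simpa using rpow_er_integrable 0 x θ le_rfl hxs
  have hiY := rpow_er_integrable Y x θ hYpos hxs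
  obtain ⟨hi1, hi2⟩ := rpow_exp_integral (2*Y) _ (by linarith) hxs
  have hg := gamma_ray Y x θ hYpos hx hθ
  rw [integral_const_mul] at hg
  set e1 : ℂ := κ * Complex.exp (-(Complex.I * Y * (Real.pi / 2))) with he1
  set e2 : ℂ := Complex.exp (-(Complex.I * (Y + 1) * θ)) with he2
  have hdiff : (∫ s in Ioi 0, ray κ Y x θ s) - (-Complex.I / x) -
      e1 * (Complex.exp (-(Complex.I * (Y + 1) * (Real.pi / 2))) * ((Real.Gamma (Y + 1) * x ^ (-(Y+1)) : ℝ) : ℂ)) =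
      ∫ s in Ioi 0, (ray κ Y x θ s - Complex.exp (-(Complex.I * θ)) * er x θ s -
        e1 * (e2 * (((s ^ Y : ℝ) : ℂ) * er x θ s))) := by
    have hsub : IntegrableOn (fun s => ray κ Y x θ s - Complex.exp (-(Complex.I * θ)) * er x θ s) (Ioi 0) :=
      (ray_integrable κ Y x θ hκ hY hcos hxs).sub (hi0.const_mul _)
    rw [integral_sub hsub
      ((hiY.const_mul _).const_mul _), integral_sub (ray_integrable κ Y x θ hκ hY hcos hxs) (hi0.const_mul _),
      integral_const_mul, er_integral x θ hxs, integral_const_mul, integral_const_mul, ← hg]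
    rfl
  have hb : ‖∫ s in Ioi 0, (ray κ Y x θ s - Complex.exp (-(Complex.I * θ)) * er x θ s -
        e1 * (e2 * (((s ^ Y : ℝ) : ℂ) * er x θ s)))‖ ≤
      ∫ s in Ioi 0, 2 * κ ^ 2 * (s ^ (2 * Y) * Real.exp (-(x * Real.sin θ * s))) := by
    refine norm_integral_le_of_norm_le (hi1.const_mul _) ?_
    filter_upwards [ae_restrict_mem measurableSet_Ioi] with s hs
    have hs' : (0:ℝ) < s := hs
    have : ray κ Y x θ s - Complex.exp (-(Complex.I * θ)) * er x θ s -
        e1 * (e2 * (((s ^ Y : ℝ) : ℂ) * er x θ s)) =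
      Complex.exp (-(Complex.I * θ)) * (er x θ s * (Complex.exp (zz κ Y θ s) - 1 - zz κ Y θ s)) := by
      have : e1 * e2 = Complex.exp (-(Complex.I * θ)) * (κ * Complex.exp (-(Complex.I * Y * (Real.pi / 2 + θ)))) := by
        rw [he1, he2, mul_assoc, ← Complex.exp_add, mul_left_comm, ← Complex.exp_add]
        congr 2; ring
      rw [← mul_assoc e1 e2, this, ray_eq, zz]; ring
    rw [this, norm_mul, norm_exp_negI, one_mul, norm_mul, norm_er]
    have h1 := norm_exp_sub_one_sub_le_of_re (zz_re κ Y θ s hκ hs' hcos)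
    rw [zz_norm κ Y θ s hκ hs'] at h1
    have h2 : s ^ (2 * Y) = (s ^ Y) ^ 2 := by
      rw [mul_comm, Real.rpow_mul hs'.le, Real.rpow_two]
    have := mul_le_mul_of_nonneg_left h1 (Real.exp_pos (-(x * Real.sin θ * s))).le
    rw [h2]
    linarith
  rw [integral_const_mul, hi2, ← hdiff] at hb
  have h := (Complex.abs_re_le_norm _).trans hb
  have h0 : (-Complex.I / (x:ℂ)).re = 0 := by simp
  have h3 : (e1 * (Complex.exp (-(Complex.I * (Y + 1) * (Real.pi / 2))) * ((Real.Gamma (Y + 1) * x ^ (-(Y+1)) : ℝ) : ℂ))).re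
      = κ * Real.Gamma (Y + 1) * x ^ (-(Y + 1)) * (-Real.sin (Real.pi * Y)) := by
    have : e1 * (Complex.exp (-(Complex.I * (Y + 1) * (Real.pi / 2))) * ((Real.Gamma (Y + 1) * x ^ (-(Y+1)) : ℝ) : ℂ))
      = ((κ * Real.Gamma (Y + 1) * x ^ (-(Y + 1)) : ℝ) : ℂ) *
        Complex.exp (((-(Real.pi * Y + Real.pi / 2) : ℝ) : ℂ) * Complex.I) := by
      have : Complex.exp (((-(Real.pi * Y + Real.pi / 2) : ℝ) : ℂ) * Complex.I) =
        Complex.exp (-(Complex.I * Y * (Real.pi / 2))) * Complex.exp (-(Complex.I * (Y + 1) * (Real.pi / 2))) := by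
        rw [← Complex.exp_add]; congr 1; push_cast; ring
      rw [this, he1]; push_cast; ring
    rw [this, Complex.re_ofReal_mul, Complex.exp_ofReal_mul_I_re, Real.cos_neg, Real.cos_add_pi_div_two]
  rw [Complex.sub_re, Complex.sub_re, h0, h3, sub_zero] at h
  linarith

lemma density_of_charFun (μ : Measure ℝ) [IsProbabilityMeasure μ] (g : ℝ → ℝ) (hg : Continuous g)
    (hgi : Integrable g) (hxg : Integrable (fun x => x * g x))
    (hch : ∀ t : ℝ, charFun μ t = ∫ x : ℝ, Complex.exp (t * x * Complex.I) * (g x : ℂ)) :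
    (∀ A, MeasurableSet A → μ.real A = ∫ x in A, g x) ∧ Integrable (fun x : ℝ => x) μ := by
  set gp : ℝ → ENNReal := fun x => ENNReal.ofReal (g x) with hgp
  set gm : ℝ → ENNReal := fun x => ENNReal.ofReal (-g x) with hgm
  have hmp : Measurable gp := hg.measurable.ennreal_ofReal
  have hmm : Measurable gm := hg.neg.measurable.ennreal_ofReal
  have hfp : IsFiniteMeasure ((volume : Measure ℝ).withDensity gp) := isFiniteMeasure_withDensity_ofReal hgi.2
  have hfm : IsFiniteMeasure ((volume : Measure ℝ).withDensity gm) := isFiniteMeasure_withDensity_ofReal hgi.neg.2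
  have hrp : ∀ x, (gp x).toReal = max (g x) 0 := fun x => ENNReal.toReal_ofReal'
  have hrm : ∀ x, (gm x).toReal = max (-g x) 0 := fun x => ENNReal.toReal_ofReal'
  have hip : Integrable (fun x => max (g x) 0) := hgi.pos_part
  have him : Integrable (fun x => max (-g x) 0) := hgi.neg_part
  have hmax : ∀ x, max (g x) 0 - max (-g x) 0 = g x := fun x => by
    rcases le_total (g x) 0 with h | h
    · rw [max_eq_right h, max_eq_left (by linarith)]; ring
    · rw [max_eq_left h, max_eq_right (by linarith)]; ring
  have hnexp : ∀ t x : ℝ, ‖Complex.exp (t * x * Complex.I)‖ = 1 := fun t x => by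
    rw [Complex.norm_exp]; simp
  have key : μ + (volume : Measure ℝ).withDensity gm = (volume : Measure ℝ).withDensity gp := by
    apply Measure.ext_of_charFun
    ext t
    have hb : ∀ (ν : Measure ℝ) [IsFiniteMeasure ν], Integrable (fun x : ℝ => Complex.exp (t * x * Complex.I)) ν := by
      intro ν _
      refine Integrable.of_bound (C := 1) (by fun_prop) (ae_of_all _ fun x => (hnexp t x).le)
    rw [charFun_apply_real, integral_add_measure (hb _) (hb _), ← charFun_apply_real, hch,
      charFun_apply_real,
      integral_withDensity_eq_integral_toReal_smul hmm (ae_of_all _ fun x => ENNReal.ofReal_lt_top),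
      integral_withDensity_eq_integral_toReal_smul hmp (ae_of_all _ fun x => ENNReal.ofReal_lt_top)]
    have hI : ∀ h : ℝ → ℝ, Integrable h → Integrable (fun x : ℝ => Complex.exp (t * x * Complex.I) * (h x : ℂ)) := by
      intro h hh
      refine hh.ofReal.bdd_mul (c := 1) (by fun_prop) (ae_of_all _ fun x => (hnexp t x).le)
    have h1 : ∀ x : ℝ, (gm x).toReal • Complex.exp (t * x * Complex.I) =
        Complex.exp (t * x * Complex.I) * ((max (-g x) 0 : ℝ) : ℂ) := fun x => by
      rw [hrm, Complex.real_smul, mul_comm]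
    have h2 : ∀ x : ℝ, (gp x).toReal • Complex.exp (t * x * Complex.I) =
        Complex.exp (t * x * Complex.I) * ((max (g x) 0 : ℝ) : ℂ) := fun x => by
      rw [hrp, Complex.real_smul, mul_comm]
    simp_rw [h1, h2]
    rw [← integral_add (hI g hgi) (hI _ him)]
    congr 1; ext x
    rw [← mul_add, ← Complex.ofReal_add]
    congr 2
    have := hmax x
    linarith
  constructor
  · intro A hA
    have h1 : (μ + (volume : Measure ℝ).withDensity gm).real A = ((volume : Measure ℝ).withDensity gp).real A := by rw [key]
    rw [measureReal_add_apply] at h1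
    have h2 : ∀ h : ℝ → ℝ, Integrable h → ((volume : Measure ℝ).withDensity (fun x => ENNReal.ofReal (h x))).real A
        = ∫ x in A, max (h x) 0 := by
      intro h hh
      rw [measureReal_def, withDensity_apply _ hA, integral_eq_lintegral_of_nonneg_ae]
      · congr 1
        apply lintegral_congr
        intro x
        rcases le_total (h x) 0 with h | h
        · rw [max_eq_right h, ENNReal.ofReal_of_nonpos h, ENNReal.ofReal_zero]
        · rw [max_eq_left h]
      · exact ae_of_all _ fun x => le_max_right _ _
      · exact hh.pos_part.aestronglyMeasurable.restrict
    rw [hgm, hgp, h2 _ hgi, h2 (fun x => - g x) hgi.neg] at h1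
    have h3 : ∫ x in A, g x = (∫ x in A, max (g x) 0) - ∫ x in A, max (-g x) 0 := by
      rw [← integral_sub hip.integrableOn him.integrableOn]
      simp_rw [hmax]
    rw [h3]; linarith
  · have hle : μ ≤ (volume : Measure ℝ).withDensity gp := by
      rw [← key]; exact Measure.le_add_right le_rfl
    refine Integrable.mono_measure ?_ hle
    rw [integrable_withDensity_iff hmp (ae_of_all _ fun x => ENNReal.ofReal_lt_top)]
    refine hxg.norm.mono' ?_ (ae_of_all _ fun x => ?_)
    · exact (continuous_id.measurable.mul hmp.ennreal_toReal).aestronglyMeasurable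
    · rw [hrp, norm_mul, norm_mul]
      gcongr
      rw [Real.norm_eq_abs, Real.norm_eq_abs, abs_of_nonneg (le_max_right _ _)]
      exact max_le (le_abs_self _) (abs_nonneg _)

open scoped FourierTransform in
theorem stable_tail (μ : Measure ℝ) [IsProbabilityMeasure μ] (κ Y : ℝ) (hκ : 0 < κ) (hY : Y ∈ Ioo (1:ℝ) 2)
    (hch : ∀ u > 0, charFun μ u = Complex.exp (κ * ((u ^ Y : ℝ) : ℂ) * Complex.exp (-(Complex.I * Y * (Real.pi / 2))))) :
    Integrable (fun x : ℝ => x) μ ∧ ∃ A > 0, ∀ x > 0,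
      |μ.real (Ici x) - (κ * Real.Gamma (Y + 1) * (-Real.sin (Real.pi * Y)) / Real.pi) / Y * x ^ (-Y)|
        ≤ A * x ^ (-(2 * Y)) := by
  obtain ⟨δ, hδ, hδ2, c, hc, hcos⟩ := exists_delta Y hY
  have hpi := Real.pi_pos
  have hYpos : 0 < Y := by linarith [hY.1]
  have hY1 := hY.1
  have hcf : Continuous (charFun μ) := continuous_charFun
  -- ray at angle zero
  have hray : ∀ x : ℝ, ∀ s > 0, ray κ Y x 0 s = Complex.exp (-(x * s * Complex.I)) * charFun μ s := by
    intro x s hs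
    rw [hch s hs, ray, Complex.exp_add]
    simp only [Complex.ofReal_zero, mul_zero, neg_zero, Complex.exp_zero, one_mul, mul_one, add_zero]
    congr 2; ring
  have hnorm : ∀ s > 0, ‖charFun μ s‖ ≤ Real.exp (-(κ * c) * s ^ Y) := by
    intro s hs
    have h1 := norm_ray κ Y 0 0 s
    rw [hray 0 s hs] at h1
    simp only [Complex.ofReal_zero, zero_mul, neg_zero, Complex.exp_zero, one_mul, zero_add] at h1
    rw [h1]
    apply Real.exp_le_exp.2
    have := mul_le_mul_of_nonneg_left (hcos 0 ⟨by linarith, by linarith⟩)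
      (show 0 ≤ κ * s ^ Y by have := le_of_lt hs; positivity)
    linarith
  have hconj : ∀ u, charFun μ (-u) = starRingEnd ℂ (charFun μ u) := fun u => charFun_neg u
  have hIoi : ∀ f : ℝ → ℂ, Continuous f → (∀ s, ‖f s‖ = ‖charFun μ s‖) → IntegrableOn f (Ioi 0) := by
    intro f hf hfn
    have h := integrableOn_rpow_mul_exp_neg_mul_rpow (p := Y) (s := 0) (b := κ * c) (by linarith) hYpos (by positivity)
    refine Integrable.mono' h hf.aestronglyMeasurable ?_
    filter_upwards [ae_restrict_mem measurableSet_Ioi] with s hs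
    rw [hfn, Real.rpow_zero, one_mul]
    exact hnorm s hs
  have hcfi : Integrable (charFun μ) := by
    rw [← integrableOn_univ, ← Iic_union_Ioi (a := (0:ℝ))]
    refine IntegrableOn.union ?_ (hIoi _ hcf fun s => rfl)
    have := IntegrableOn.comp_neg_Iic (c := (0:ℝ)) (f := fun u => charFun μ (-u)) (μ := volume) (by
      rw [neg_zero, integrableOn_Ici_iff_integrableOn_Ioi]
      refine hIoi _ (by fun_prop) fun s => ?_
      rw [hconj, RCLike.norm_conj])
    simpa using this
  have hn1 : ∀ x u : ℝ, ‖Complex.exp (-(x * u * Complex.I))‖ = 1 := fun x u => by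
    rw [Complex.norm_exp]; simp
  have hIntg : ∀ x : ℝ, Integrable (fun u : ℝ => Complex.exp (-(x * u * Complex.I)) * charFun μ u) := by
    intro x
    exact hcfi.bdd_mul (c := 1) (by fun_prop) (ae_of_all _ fun u => (hn1 x u).le)
  set g : ℝ → ℝ := fun x => (∫ s in Ioi 0, ray κ Y x 0 s).re / Real.pi with hg
  have hgG : ∀ x : ℝ, ∫ u : ℝ, Complex.exp (-(x * u * Complex.I)) * charFun μ u = ((2 * Real.pi * g x : ℝ) : ℂ) := by
    intro x
    have e1 : ∫ s in Ioi 0, ray κ Y x 0 s = ∫ u in Ioi (0:ℝ), Complex.exp (-(x * u * Complex.I)) * charFun μ u :=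
      setIntegral_congr_fun measurableSet_Ioi fun s hs => hray x s hs
    rw [← intervalIntegral.integral_Iic_add_Ioi (b := 0) (hIntg x).integrableOn (hIntg x).integrableOn, ← e1]
    have e2 : ∫ u in Iic (0:ℝ), Complex.exp (-(x * u * Complex.I)) * charFun μ u =
        starRingEnd ℂ (∫ s in Ioi 0, ray κ Y x 0 s) := by
      rw [e1, ← integral_conj, ← neg_zero, ← integral_comp_neg_Ioi, neg_zero]
      congr 1; ext u
      rw [hconj, map_mul, ← Complex.exp_conj]
      congr 2
      simp
    rw [e2]
    have : 2 * Real.pi * g x = 2 * (∫ s in Ioi 0, ray κ Y x 0 s).re := by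
      simp only [hg]; field_simp
    rw [this, add_comm, Complex.add_conj]
  have hgcont : Continuous g := by
    have h1 : Continuous (fun x : ℝ => ∫ u : ℝ, Complex.exp (-(x * u * Complex.I)) * charFun μ u) := by
      refine continuous_of_dominated (bound := fun u => ‖charFun μ u‖) (fun x => (hIntg x).aestronglyMeasurable) ?_ hcfi.norm ?_
      · intro x
        refine ae_of_all _ fun u => ?_
        rw [norm_mul, hn1, one_mul]
      · refine ae_of_all _ fun u => ?_
        fun_prop
    have h2 : g = fun x : ℝ => (∫ u : ℝ, Complex.exp (-(x * u * Complex.I)) * charFun μ u).re / (2 * Real.pi) := by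
      ext x; rw [hgG, Complex.ofReal_re]; field_simp
    rw [h2]
    exact (Complex.continuous_re.comp h1).div_const _
  -- bounds
  have hsin : 0 < Real.sin δ := Real.sin_pos_of_pos_of_lt_pi hδ (by linarith)
  have hb1 : ∀ x ≠ 0, |g x| ≤ κ * Real.Gamma (Y + 1) * Real.sin δ ^ (-(Y+1)) / Real.pi * |x| ^ (-(Y+1)) := by
    intro x hx
    obtain ⟨θ, hθ, hs⟩ : ∃ θ ∈ Ioo (-(2*δ)) (2*δ), x * Real.sin θ = |x| * Real.sin δ := by
      rcases lt_or_gt_of_ne hx with h | h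
      · exact ⟨-δ, ⟨by linarith, by linarith⟩, by rw [abs_of_neg h, Real.sin_neg]; ring⟩
      · exact ⟨δ, ⟨by linarith, by linarith⟩, by rw [abs_of_pos h]⟩
    have hax : 0 < |x| := abs_pos.2 hx
    have h1 := J_bound1 κ Y x θ hκ hY (by linarith [hcos θ hθ]) (by rw [hs]; positivity)
    rw [← ray_rot κ Y x δ c hκ hY hδ hc hcos θ hθ, hs, Real.mul_rpow hax.le hsin.le] at h1
    simp only [hg]
    rw [abs_div, abs_of_pos hpi, div_le_iff₀ hpi]
    refine h1.trans (le_of_eq ?_)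
    field_simp
  have hb2 : ∀ x > 0, |g x - κ * Real.Gamma (Y + 1) * (-Real.sin (Real.pi * Y)) / Real.pi * x ^ (-(Y+1))| ≤
      2 * κ ^ 2 * Real.Gamma (2 * Y + 1) * Real.sin δ ^ (-(2*Y+1)) / Real.pi * x ^ (-(2*Y+1)) := by
    intro x hx
    have hθ : δ ∈ Ioo (-(2*δ)) (2*δ) := ⟨by linarith, by linarith⟩
    have h1 := J_bound2 κ Y x δ hκ hY (by linarith [hcos δ hθ]) hx ⟨hδ, by linarith⟩
    rw [← ray_rot κ Y x δ c hκ hY hδ hc hcos δ hθ, Real.mul_rpow (le_of_lt hx) hsin.le] at h1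
    have h2 : g x - κ * Real.Gamma (Y + 1) * (-Real.sin (Real.pi * Y)) / Real.pi * x ^ (-(Y+1)) =
      ((∫ s in Ioi 0, ray κ Y x 0 s).re - κ * Real.Gamma (Y + 1) * x ^ (-(Y + 1)) * (-Real.sin (Real.pi * Y))) / Real.pi := by
      simp only [hg]; ring
    rw [h2, abs_div, abs_of_pos hpi, div_le_iff₀ hpi]
    refine h1.trans (le_of_eq ?_)
    field_simp
  obtain ⟨D, hD0, hD⟩ : ∃ D > 0, ∀ x, |g x| ≤ D * (1 + ‖x‖) ^ (-(Y+1)) := by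
    set A := κ * Real.Gamma (Y + 1) * Real.sin δ ^ (-(Y+1)) / Real.pi with hA
    have hA0 : 0 < A := by
      have := Real.Gamma_pos_of_pos (show 0 < Y + 1 by linarith)
      positivity
    obtain ⟨B, hB⟩ := (isCompact_Icc (a := (-1:ℝ)) (b := 1)).exists_bound_of_continuousOn hgcont.continuousOn
    have hB0 : 0 ≤ B := (norm_nonneg _).trans (hB 0 (by simp))
    have h2 : (0:ℝ) < 2 ^ (Y + 1) := by positivity
    refine ⟨(A + B) * 2 ^ (Y + 1), by positivity, fun x => ?_⟩
    have hx0 := abs_nonneg x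
    rw [Real.norm_eq_abs]
    have hexp : (2:ℝ) ^ (Y + 1) * (1 + |x|) ^ (-(Y+1)) = ((1 + |x|) / 2) ^ (-(Y+1)) := by
      rw [Real.div_rpow (by positivity) (by norm_num), Real.rpow_neg (by norm_num : (0:ℝ) ≤ 2)]
      field_simp
    rw [mul_assoc, hexp]
    have hpos : 0 < ((1 + |x|) / 2) ^ (-(Y+1)) := by positivity
    rcases le_total |x| 1 with h | h
    · have h3 := hB x (abs_le.1 h)
      rw [Real.norm_eq_abs] at h3
      have : 1 ≤ ((1 + |x|) / 2) ^ (-(Y+1)) :=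
        Real.one_le_rpow_of_pos_of_le_one_of_nonpos (by positivity) (by linarith) (by linarith)
      nlinarith
    · have hxne : x ≠ 0 := by rintro rfl; simp at h; linarith
      have h3 := hb1 x hxne
      have : |x| ^ (-(Y+1)) ≤ ((1 + |x|) / 2) ^ (-(Y+1)) :=
        Real.rpow_le_rpow_of_nonpos (by positivity) (by linarith) (by linarith)
      nlinarith
  have hgi : Integrable g := by
    refine Integrable.mono' ((integrable_one_add_norm (E := ℝ) (μ := volume) (r := Y + 1)
      (by simp; linarith)).const_mul D) hgcont.aestronglyMeasurable (ae_of_all _ hD)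
  have hxgi : Integrable (fun x => x * g x) := by
    refine Integrable.mono' ((integrable_one_add_norm (E := ℝ) (μ := volume) (r := Y)
      (by simp; linarith)).const_mul D) (continuous_id.mul hgcont).aestronglyMeasurable (ae_of_all _ fun x => ?_)
    rw [norm_mul]
    have h1 : (1 + ‖x‖) ^ (-Y) = (1 + ‖x‖) * (1 + ‖x‖) ^ (-(Y+1)) := by
      rw [← Real.rpow_one_add' (by positivity) (by linarith)]; congr 1; ring
    rw [h1]
    have h2 := hD x
    rw [Real.norm_eq_abs (g x)]
    have h3 : 0 ≤ D * (1 + ‖x‖) ^ (-(Y+1)) := by positivity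
    have := mul_le_mul (show ‖x‖ ≤ 1 + ‖x‖ by linarith) h2 (abs_nonneg _) (by positivity)
    linarith
  have hinv : ∀ t : ℝ, charFun μ t = ∫ x : ℝ, Complex.exp (t * x * Complex.I) * (g x : ℂ) := by
    have hF : 𝓕 (fun v : ℝ => charFun μ (2 * Real.pi * v)) = fun x : ℝ => (g x : ℂ) := by
      ext x
      rw [Real.fourier_eq']
      have h1 := Measure.integral_comp_mul_left (fun u : ℝ => Complex.exp (-(x * u * Complex.I)) * charFun μ u) (2 * Real.pi)
      rw [hgG, abs_of_pos (by positivity), Complex.real_smul, ← Complex.ofReal_mul,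
        show (2 * Real.pi)⁻¹ * (2 * Real.pi * g x) = g x by field_simp] at h1
      rw [← h1]
      congr 1; ext v
      rw [smul_eq_mul]
      congr 2
      simp only [RCLike.inner_apply, conj_trivial]
      push_cast; ring
    intro t
    have h2 := Continuous.fourierInv_fourier_eq (f := fun v : ℝ => charFun μ (2 * Real.pi * v))
      (by fun_prop) (hcfi.comp_mul_left' (by positivity)) (by rw [hF]; exact hgi.ofReal)
    have h3 := congrFun h2 (t / (2 * Real.pi))
    rw [show 2 * Real.pi * (t / (2 * Real.pi)) = t by field_simp, hF, Real.fourierInv_eq'] at h3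
    rw [← h3]
    congr 1; ext x
    rw [smul_eq_mul]
    congr 2
    simp only [RCLike.inner_apply, conj_trivial]
    rw [← Complex.ofReal_mul]
    congr 2
    field_simp
  obtain ⟨hmeas, hid⟩ := density_of_charFun μ g hgcont hgi hxgi hinv
  refine ⟨hid, ?_⟩
  set E := 2 * κ ^ 2 * Real.Gamma (2 * Y + 1) * Real.sin δ ^ (-(2*Y+1)) / Real.pi with hE
  set c1 := κ * Real.Gamma (Y + 1) * (-Real.sin (Real.pi * Y)) / Real.pi with hc1
  have hE0 : 0 < E := by
    have := Real.Gamma_pos_of_pos (show 0 < 2 * Y + 1 by linarith)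
    positivity
  refine ⟨E / (2 * Y), by positivity, fun x hx => ?_⟩
  have hi1 := integrableOn_Ioi_rpow_of_lt (a := -(Y+1)) (by linarith) hx
  have hi2 := integrableOn_Ioi_rpow_of_lt (a := -(2*Y+1)) (by linarith) hx
  have hv1 := integral_Ioi_rpow_of_lt (a := -(Y+1)) (by linarith) hx
  have hv2 := integral_Ioi_rpow_of_lt (a := -(2*Y+1)) (by linarith) hx
  rw [show -(Y+1) + 1 = -Y by ring] at hv1
  rw [show -(2*Y+1) + 1 = -(2*Y) by ring] at hv2
  have h1 : μ.real (Ici x) - c1 / Y * x ^ (-Y) = ∫ t in Ioi x, (g t - c1 * t ^ (-(Y+1))) := by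
    rw [integral_sub hgi.integrableOn (hi1.const_mul _), integral_const_mul, hv1, hmeas _ measurableSet_Ici,
      integral_Ici_eq_integral_Ioi]
    rw [neg_div_neg_eq]; ring
  rw [h1, ← Real.norm_eq_abs]
  refine (norm_integral_le_of_norm_le (hi2.const_mul E) ?_).trans (le_of_eq ?_)
  · filter_upwards [ae_restrict_mem measurableSet_Ioi] with t ht
    exact hb2 t (lt_trans hx ht)
  · rw [integral_const_mul, hv2, neg_div_neg_eq]; ring

lemma charFun_of_hyp {Ω : Type} [MeasurableSpace Ω] (P : Measure Ω) (Y κ : ℝ)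
    (U : Ω → ℝ) (hU : Measurable U)
    (hUchar : ∀ u : ℝ, (∫ ω, Complex.exp (Complex.I * u * (U ω)) ∂P) =
      Complex.exp (((κ * |u| ^ Y : ℝ) : ℂ) *
        (((Real.cos (Real.pi * Y / 2) : ℝ) : ℂ)
          - Complex.I * ((Real.sign u : ℝ) : ℂ) * ((Real.sin (Real.pi * Y / 2) : ℝ) : ℂ)))) :
    ∀ u > 0, charFun (P.map U) u =
      Complex.exp (κ * ((u ^ Y : ℝ) : ℂ) * Complex.exp (-(Complex.I * Y * (Real.pi / 2)))) := by
  intro u hu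
  rw [charFun_apply_real, integral_map hU.aemeasurable (by fun_prop)]
  have h1 := hUchar u
  rw [Real.sign_of_pos hu, abs_of_pos hu] at h1
  have h2 : ∀ ω, Complex.exp (u * (U ω) * Complex.I) = Complex.exp (Complex.I * u * (U ω)) := by
    intro ω; congr 1; ring
  simp_rw [h2]
  rw [h1]
  have h3 : Complex.exp (-(Complex.I * Y * (Real.pi / 2))) =
      ((Real.cos (Real.pi * Y / 2) : ℝ) : ℂ) - Complex.I * ((Real.sin (Real.pi * Y / 2) : ℝ) : ℂ) := by
    rw [show -(Complex.I * Y * (Real.pi / 2)) = ((-(Real.pi * Y / 2) : ℝ) : ℂ) * Complex.I by push_cast; ring,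
      Complex.exp_mul_I]
    rw [← Complex.ofReal_cos, ← Complex.ofReal_sin, Real.cos_neg, Real.sin_neg]; push_cast; ring
  rw [h3]
  congr 1
  push_cast; ring

lemma gamma_neg_pos (Y : ℝ) (hY : Y ∈ Ioo (1:ℝ) 2) : 0 < Real.Gamma (-Y) := by
  have h1 := Real.Gamma_add_one (s := -Y) (by linarith [hY.1])
  have h2 := Real.Gamma_add_one (s := -Y + 1) (by linarith [hY.1])
  have h3 := Real.Gamma_pos_of_pos (show 0 < -Y + 1 + 1 by linarith [hY.2])
  rw [h2, h1] at h3
  have h4 : 0 < (-Y + 1) * -Y := by nlinarith [hY.1]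
  rw [← mul_assoc] at h3
  exact (pos_iff_pos_of_mul_pos h3).1 h4

lemma const_eq (Y C : ℝ) (hY : Y ∈ Ioo (1:ℝ) 2) :
    (C * Real.Gamma (-Y)) * Real.Gamma (Y + 1) * (-Real.sin (Real.pi * Y)) / Real.pi = C := by
  have h := Real.Gamma_mul_Gamma_one_sub (-Y)
  rw [show 1 - -Y = Y + 1 by ring, show Real.pi * -Y = -(Real.pi * Y) by ring, Real.sin_neg] at h
  have hpi := Real.pi_pos
  have hs : Real.sin (Real.pi * Y) < 0 := by
    have : Real.sin (Real.pi * Y) = -Real.sin (Real.pi * Y - Real.pi) := by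
      rw [Real.sin_sub_pi]; ring
    rw [this]
    have := Real.sin_pos_of_pos_of_lt_pi (x := Real.pi * Y - Real.pi) (by nlinarith [hY.1]) (by nlinarith [hY.2])
    linarith
  rw [mul_assoc C, h]
  have : Real.sin (Real.pi * Y) ≠ 0 := hs.ne
  field_simp

lemma rpow_lip (Y q a b : ℝ) (hY : 0 < Y) (hq : 0 < q) (ha : q ≤ a) (hb : q ≤ b) :
    |a ^ (-Y) - b ^ (-Y)| ≤ Y * q ^ (-(Y+1)) * |a - b| := by
  have := Convex.norm_image_sub_le_of_norm_hasDerivWithin_le (f := fun x : ℝ => x ^ (-Y))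
    (f' := fun x => -Y * x ^ (-Y - 1)) (s := Ici q) (x := b) (y := a) (C := Y * q ^ (-(Y+1)))
    (fun x hx => (Real.hasDerivAt_rpow_const (Or.inl (lt_of_lt_of_le hq hx).ne')).hasDerivWithinAt)
    (fun x hx => by
      have hx' : q ≤ x := hx
      have hx0 : 0 < x := lt_of_lt_of_le hq hx'
      rw [norm_mul, norm_neg, Real.norm_of_nonneg hY.le, Real.norm_of_nonneg (by positivity),
        show -Y - 1 = -(Y+1) by ring]
      exact mul_le_mul_of_nonneg_left (Real.rpow_le_rpow_of_nonpos hq hx' (by linarith)) hY.le)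
    (convex_Ici q) hb ha
  simpa [Real.norm_eq_abs] using this

lemma meas_set (M G w : ℝ) :
    MeasurableSet {p : ℝ × ℝ | p.2 ≤ p.1 ∧ w ≤ M * p.1 + G * p.2} := by
  have h1 : MeasurableSet {p : ℝ × ℝ | p.2 ≤ p.1} := measurableSet_le measurable_snd measurable_fst
  have h2 : MeasurableSet {p : ℝ × ℝ | w ≤ M * p.1 + G * p.2} :=
    measurableSet_le measurable_const (by fun_prop)
  have h3 : {p : ℝ × ℝ | p.2 ≤ p.1 ∧ w ≤ M * p.1 + G * p.2} =
      {p : ℝ × ℝ | p.2 ≤ p.1} ∩ {p : ℝ × ℝ | w ≤ M * p.1 + G * p.2} := by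
    ext p; simp
  rw [h3]
  exact h1.inter h2

lemma main_bound (μ ν : Measure ℝ) [IsProbabilityMeasure μ] [IsProbabilityMeasure ν]
    (Y C M G A : ℝ) (hY : Y ∈ Set.Ioo (1:ℝ) 2) (hC : 0 < C) (hM : 1 < M) (hG : 0 < G) (hA : 0 < A)
    (hν : Integrable (fun x : ℝ => x) ν)
    (hμ : ∀ x > 0, |μ.real (Ici x) - C / Y * x ^ (-Y)| ≤ A * x ^ (-(2 * Y)))
    (w : ℝ) (hw : 1 ≤ w) :
    |(μ.prod ν).real {p | p.2 ≤ p.1 ∧ w ≤ M * p.1 + G * p.2} - C / Y * (w / M) ^ (-Y)| ≤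
      (A * (M + G) ^ (2 * Y) + C * (M + G) ^ (Y + 1) * (1 + G / M) * ∫ v, |v| ∂ν) * w ^ (-(Y+1)) := by
  have hw0 : 0 < w := by linarith
  have hM0 : 0 < M := by linarith
  have hY1 := hY.1
  have hY0 : 0 < Y := by linarith
  have hMG : 0 < M + G := by linarith
  have hmeas : MeasurableSet {p : ℝ × ℝ | p.2 ≤ p.1 ∧ w ≤ M * p.1 + G * p.2} :=
    meas_set M G w
  set T : ℝ → ℝ := fun v => max v ((w - G * v) / M) with hT
  have hpre : ∀ v : ℝ, (fun u => (u, v)) ⁻¹' {p : ℝ × ℝ | p.2 ≤ p.1 ∧ w ≤ M * p.1 + G * p.2} = Ici (T v) := by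
    intro v; ext u
    simp only [mem_preimage, mem_setOf_eq, mem_Ici, hT, max_le_iff, div_le_iff₀ hM0]
    constructor <;> rintro ⟨h1, h2⟩ <;> exact ⟨h1, by linarith⟩
  have hSm : Measurable (fun v => μ (Ici (T v))) := by
    have := measurable_measure_prodMk_right (μ := μ) hmeas
    simpa only [hpre] using this
  have hprob : (μ.prod ν).real {p | p.2 ≤ p.1 ∧ w ≤ M * p.1 + G * p.2} = ∫ v, μ.real (Ici (T v)) ∂ν := by
    rw [measureReal_def, Measure.prod_apply_symm hmeas]
    simp_rw [hpre]
    simp only [measureReal_def]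
    rw [integral_toReal hSm.aemeasurable (ae_of_all _ fun v => measure_lt_top _ _)]
  have hSi : Integrable (fun v => μ.real (Ici (T v))) ν := by
    refine Integrable.of_bound (C := 1) hSm.ennreal_toReal.aestronglyMeasurable (ae_of_all _ fun v => ?_)
    rw [Real.norm_of_nonneg measureReal_nonneg]
    exact measureReal_le_one
  have hdiff : (∫ v, μ.real (Ici (T v)) ∂ν) - C / Y * (w / M) ^ (-Y) =
      ∫ v, (μ.real (Ici (T v)) - C / Y * (w / M) ^ (-Y)) ∂ν := by
    rw [integral_sub hSi (integrable_const _)]; simp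
  set q := w / (M + G) with hq
  have hq0 : 0 < q := by positivity
  have hqr : ∀ a : ℝ, q ^ (-a) = (M + G) ^ a * w ^ (-a) := by
    intro a
    rw [hq, Real.div_rpow hw0.le hMG.le, Real.rpow_neg hMG.le]; field_simp
  have hpt : ∀ v, |μ.real (Ici (T v)) - C / Y * (w / M) ^ (-Y)| ≤
      A * (M + G) ^ (2 * Y) * w ^ (-(Y+1)) + C * (M + G) ^ (Y + 1) * (1 + G / M) * w ^ (-(Y+1)) * |v| := by
    intro v
    have hTq : q ≤ T v := by
      rcases le_total q v with h | h
      · exact h.trans (le_max_left _ _)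
      · refine le_trans ?_ (le_max_right _ _)
        rw [le_div_iff₀ hM0]
        have : q * (M + G) = w := by rw [hq]; field_simp
        nlinarith
    have hwq : q ≤ w / M := by rw [hq]; gcongr; linarith
    have hTL : |T v - w / M| ≤ (1 + G / M) * |v| := by
      have hGM : 0 < G / M := by positivity
      have hsub : (w - G * v) / M = w / M - G / M * v := by ring
      have hav := abs_nonneg v
      rcases le_total v ((w - G * v) / M) with h | h
      · simp only [hT]
        rw [max_eq_right h, hsub, show w / M - G / M * v - w / M = -(G / M * v) by ring, abs_neg, abs_mul,
          abs_of_pos hGM]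
        linarith
      · simp only [hT]
        rw [max_eq_left h]
        rw [hsub] at h
        have hwM : 0 < w / M := by positivity
        have hv0 : 0 < v := by
          by_contra hneg
          push Not at hneg
          nlinarith
        rw [abs_of_pos hv0, abs_le]
        constructor <;> nlinarith
    have h1 := hμ (T v) (lt_of_lt_of_le hq0 hTq)
    have h2 : A * (T v) ^ (-(2 * Y)) ≤ A * (M + G) ^ (2 * Y) * w ^ (-(Y+1)) := by
      rw [mul_assoc]
      refine mul_le_mul_of_nonneg_left ?_ hA.le
      refine (Real.rpow_le_rpow_of_nonpos hq0 hTq (by linarith)).trans ?_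
      rw [hqr]
      exact mul_le_mul_of_nonneg_left (Real.rpow_le_rpow_of_exponent_le hw (by linarith)) (by positivity)
    have h3 := rpow_lip Y q (T v) (w / M) hY0 hq0 hTq hwq
    have h4 : |C / Y * (T v) ^ (-Y) - C / Y * (w / M) ^ (-Y)| ≤
        C * (M + G) ^ (Y + 1) * (1 + G / M) * w ^ (-(Y+1)) * |v| := by
      rw [← mul_sub, abs_mul, abs_of_pos (by positivity)]
      calc C / Y * |(T v) ^ (-Y) - (w / M) ^ (-Y)| ≤ C / Y * (Y * q ^ (-(Y+1)) * ((1 + G / M) * |v|)) := by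
            refine mul_le_mul_of_nonneg_left (h3.trans ?_) (by positivity)
            exact mul_le_mul_of_nonneg_left hTL (by positivity)
        _ = _ := by rw [hqr]; field_simp
    have h5 := abs_sub_le (μ.real (Ici (T v))) (C / Y * (T v) ^ (-Y)) (C / Y * (w / M) ^ (-Y))
    linarith
  rw [hprob, hdiff, ← Real.norm_eq_abs]
  refine (norm_integral_le_of_norm_le ((integrable_const _).add (hν.abs.const_mul _)) (ae_of_all _ hpt)).trans (le_of_eq ?_)
  simp only [Pi.add_apply]
  rw [integral_add (integrable_const _) (hν.abs.const_mul _), integral_const, integral_const_mul]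
  simp
  ring

/-- First-order tail estimate for the skewed combination `M·U + G·V` on `{U ≥ V}`. -/
theorem stmt5
    {Ω : Type} [MeasurableSpace Ω] (P : Measure Ω) [IsProbabilityMeasure P]
    (Y C M G : ℝ) (hY : Y ∈ Set.Ioo (1:ℝ) 2) (hC : 0 < C) (hM : 1 < M) (hG : 0 < G)
    (U V : Ω → ℝ) (hU : Measurable U) (hV : Measurable V)
    (hIndep : IndepFun U V P)
    (hUchar : ∀ u : ℝ, (∫ ω, Complex.exp (Complex.I * u * (U ω)) ∂P) =
      Complex.exp (((C * Real.Gamma (-Y) * |u| ^ Y : ℝ) : ℂ) *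
        (((Real.cos (Real.pi * Y / 2) : ℝ) : ℂ)
          - Complex.I * ((Real.sign u : ℝ) : ℂ) * ((Real.sin (Real.pi * Y / 2) : ℝ) : ℂ))))
    (hVchar : ∀ u : ℝ, (∫ ω, Complex.exp (Complex.I * u * (V ω)) ∂P) =
      Complex.exp (((C * Real.Gamma (-Y) * |u| ^ Y : ℝ) : ℂ) *
        (((Real.cos (Real.pi * Y / 2) : ℝ) : ℂ)
          - Complex.I * ((Real.sign u : ℝ) : ℂ) * ((Real.sin (Real.pi * Y / 2) : ℝ) : ℂ)))) :
    ∃ K > (0:ℝ), ∃ w₀ > (0:ℝ), ∀ w ≥ w₀,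
      |w * ((P {ω | V ω ≤ U ω ∧ w ≤ M * U ω + G * V ω}).toReal - C * M ^ Y / (Y * w ^ Y))|
        ≤ K * (w ^ (1 - 2*Y) + w ^ (-Y)) := by
  have hpos := gamma_neg_pos Y hY
  have hκ : 0 < C * Real.Gamma (-Y) := mul_pos hC hpos
  have hY0 : 0 < Y := by linarith [hY.1]
  have hM0 : 0 < M := by linarith
  have : IsProbabilityMeasure (P.map U) := Measure.isProbabilityMeasure_map hU.aemeasurable
  have : IsProbabilityMeasure (P.map V) := Measure.isProbabilityMeasure_map hV.aemeasurable
  obtain ⟨-, A, hA, htail⟩ := stable_tail (P.map U) (C * Real.Gamma (-Y)) Y hκ hY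
    (charFun_of_hyp P Y _ U hU hUchar)
  obtain ⟨hν, -⟩ := stable_tail (P.map V) (C * Real.Gamma (-Y)) Y hκ hY
    (charFun_of_hyp P Y _ V hV hVchar)
  rw [const_eq Y C hY] at htail
  have hE : 0 ≤ ∫ v, |v| ∂(P.map V) := integral_nonneg fun v => abs_nonneg v
  set K := A * (M + G) ^ (2 * Y) + C * (M + G) ^ (Y + 1) * (1 + G / M) * ∫ v, |v| ∂(P.map V) with hK
  have hK0 : 0 < K := by positivity
  refine ⟨K, hK0, 1, one_pos, fun w hw => ?_⟩
  have hw0 : 0 < w := by linarith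
  have h := main_bound (P.map U) (P.map V) Y C M G A hY hC hM hG hA hν htail w hw
  rw [← hK] at h
  have hmeas : MeasurableSet {p : ℝ × ℝ | p.2 ≤ p.1 ∧ w ≤ M * p.1 + G * p.2} :=
    meas_set M G w
  have hP : (P {ω | V ω ≤ U ω ∧ w ≤ M * U ω + G * V ω}).toReal =
      ((P.map U).prod (P.map V)).real {p | p.2 ≤ p.1 ∧ w ≤ M * p.1 + G * p.2} := by
    rw [← (indepFun_iff_map_prod_eq_prod_map_map hU.aemeasurable hV.aemeasurable).1 hIndep,
      measureReal_def, Measure.map_apply (hU.prodMk hV) hmeas]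
    rfl
  have hc : C * M ^ Y / (Y * w ^ Y) = C / Y * (w / M) ^ (-Y) := by
    rw [Real.div_rpow hw0.le hM0.le, Real.rpow_neg hw0.le, Real.rpow_neg hM0.le]
    field_simp
  rw [hP, hc, abs_mul, abs_of_pos hw0]
  have hww : w * w ^ (-(Y+1)) = w ^ (-Y) := by
    rw [← Real.rpow_one_add' hw0.le (by linarith)]; congr 1; ring
  calc _ ≤ w * (K * w ^ (-(Y+1))) := mul_le_mul_of_nonneg_left h hw0.le
    _ = K * w ^ (-Y) := by rw [mul_left_comm, hww]
    _ ≤ _ := by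
      refine mul_le_mul_of_nonneg_left ?_ hK0.le
      have : 0 ≤ w ^ (1 - 2 * Y) := by positivity
      linarith
end

section
/- Finiteness of the third-order coefficient integral: the function w ↦ w·(P(Z⁺ + Ũ ≥ w) − C·M^Y/(Y·w^Y) − C·(G+1)^Y/(Y·w^Y)) is Lebesgue integrable on (0,∞). -/
open MeasureTheory ProbabilityTheory Filter Topology Asymptotics Set
/-- The tail bound from the characteristic function. -/
lemma aux_tail (μ : Measure ℝ) [IsProbabilityMeasure μ] (Y D : ℝ) (hY : 1 < Y) (hD : 0 ≤ D)
    (h : ∀ u : ℝ, ‖1 - charFun μ u‖ ≤ D * |u| ^ Y) (r : ℝ) (hr : 0 < r) :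
    μ.real {x | r < |x|} ≤ 2 * D * 2 ^ Y * r ^ (-Y) := by
  refine (measureReal_abs_gt_le_integral_charFun hr).trans ?_
  have h1 : ‖∫ t in (-2 * r⁻¹)..(2 * r⁻¹), 1 - charFun μ t‖
      ≤ (D * (2 * r⁻¹) ^ Y) * |2 * r⁻¹ - (-2 * r⁻¹)| := by
    apply intervalIntegral.norm_integral_le_of_norm_le_const
    intro t ht
    refine (h t).trans ?_
    have hr' : (-2 * r⁻¹) ≤ 2 * r⁻¹ := by
      have : 0 < r⁻¹ := by positivity
      linarith
    rw [uIoc_of_le hr'] at ht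
    have : |t| ≤ 2 * r⁻¹ := by
      rw [abs_le]; constructor <;> linarith [ht.1, ht.2]
    gcongr
  have h2 : |2 * r⁻¹ - (-2 * r⁻¹)| = 4 * r⁻¹ := by
    have : 0 < r⁻¹ := by positivity
    rw [abs_of_nonneg (by linarith)]; ring
  rw [h2, Real.mul_rpow (by norm_num) (by positivity), Real.inv_rpow hr.le, ← Real.rpow_neg hr.le] at h1
  calc 2⁻¹ * r * _ ≤ 2⁻¹ * r * (D * (2 ^ Y * r ^ (-Y)) * (4 * r⁻¹)) := by gcongr
    _ = _ := by field_simp; ring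

lemma aux_integrable (μ : Measure ℝ) [IsProbabilityMeasure μ] (Y D : ℝ) (hY : 1 < Y)
    (h : ∀ r : ℝ, 0 < r → μ.real {x | r < |x|} ≤ D * r ^ (-Y)) :
    Integrable (fun x : ℝ => x) μ := by
  refine ⟨by fun_prop, ?_⟩
  rw [hasFiniteIntegral_iff_norm]
  have h0 := lintegral_eq_lintegral_meas_lt μ (f := fun x : ℝ => ‖x‖)
    (Eventually.of_forall fun x => norm_nonneg x) (by fun_prop)
  rw [h0]
  have : Ioi (0:ℝ) = Ioc 0 1 ∪ Ioi 1 := by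
    rw [Ioc_union_Ioi_eq_Ioi]; norm_num
  rw [this]
  refine (lintegral_union_le _ _ _).trans_lt ?_
  refine ENNReal.add_lt_top.2 ⟨?_, ?_⟩
  · calc ∫⁻ t in Ioc (0:ℝ) 1, μ {a | t < ‖a‖} ≤ ∫⁻ t in Ioc (0:ℝ) 1, 1 := by
          refine lintegral_mono fun t => prob_le_one
      _ < ⊤ := by simp
  · have hi : IntegrableOn (fun t : ℝ => D * t ^ (-Y)) (Ioi 1) :=
      (integrableOn_Ioi_rpow_of_lt (by linarith) one_pos).const_mul D
    refine lt_of_le_of_lt ?_ hi.lintegral_lt_top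
    refine setLIntegral_mono' measurableSet_Ioi fun t ht => ?_
    have := h t (lt_trans one_pos ht)
    rw [Measure.real] at this
    exact (ENNReal.le_ofReal_iff_toReal_le (measure_ne_top _ _) (measureReal_nonneg.trans (h t (lt_trans one_pos ht)))).2 this

lemma aux_charFun_bound (μ : Measure ℝ) [IsProbabilityMeasure μ] (Y c a b : ℝ)
    (hφ : ∀ u : ℝ, charFun μ u = Complex.exp (((c * |u| ^ Y : ℝ) : ℂ) *
        ((a : ℂ) - Complex.I * ((Real.sign u : ℝ) : ℂ) * (b : ℂ)))) (u : ℝ) :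
    ‖1 - charFun μ u‖ ≤ (2 * |c| * (|a| + |b|)) * |u| ^ Y := by
  have hz : ‖((c * |u| ^ Y : ℝ) : ℂ) *
        ((a : ℂ) - Complex.I * ((Real.sign u : ℝ) : ℂ) * (b : ℂ))‖ ≤ |c| * |u| ^ Y * (|a| + |b|) := by
    rw [norm_mul, Complex.norm_real, Real.norm_eq_abs, abs_mul, abs_of_nonneg (a := |u| ^ Y) (by positivity)]
    gcongr
    refine (norm_sub_le _ _).trans ?_
    rw [norm_mul, norm_mul]
    simp only [Complex.norm_real, Complex.norm_I, one_mul, Real.norm_eq_abs]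
    have : |Real.sign u| ≤ 1 := by
      rcases Real.sign_apply_eq u with h | h | h <;> rw [h] <;> simp
    nlinarith [abs_nonneg b]
  set z := ((c * |u| ^ Y : ℝ) : ℂ) *
        ((a : ℂ) - Complex.I * ((Real.sign u : ℝ) : ℂ) * (b : ℂ)) with hzd
  have h2 : ‖1 - charFun μ u‖ ≤ 2 * ‖z‖ := by
    by_cases h1 : ‖z‖ ≤ 1
    · rw [hφ u, norm_sub_rev]
      exact Complex.norm_exp_sub_one_le h1
    · calc ‖1 - charFun μ u‖ ≤ (2:ℝ) := by
            refine (norm_sub_le _ _).trans ?_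
            have := norm_charFun_le_one (μ := μ) u
            simp; linarith
        _ ≤ 2 * ‖z‖ := by linarith
  linarith
/-- Uniqueness: a signed integrable weight is determined by its Fourier transform. -/
lemma aux_unique {X : Type*} [MeasurableSpace X] (m : Measure X) (a : X → ℝ) (T : X → ℝ)
    (ha : Integrable a m) (ham : Measurable a) (hT : Measurable T)
    (h : ∀ u : ℝ, 0 < u → ∫ x, (a x : ℂ) * Complex.exp (u * T x * Complex.I) ∂m = 0)
    (g : ℝ → ℝ) (hg : Measurable g) (B : ℝ) (hB : ∀ x, |g x| ≤ B) :
    ∫ x, a x * g (T x) ∂m = 0 := by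
  set mp : Measure X := m.withDensity (fun x => ENNReal.ofReal (a x)) with hmp
  set mn : Measure X := m.withDensity (fun x => ENNReal.ofReal (-a x)) with hmn
  have : IsFiniteMeasure mp := isFiniteMeasure_withDensity_ofReal ha.2
  have : IsFiniteMeasure mn := isFiniteMeasure_withDensity_ofReal ha.neg.2
  -- integral formulas
  have key : ∀ (f : X → ℂ) (_ : Measurable f) (B : ℝ) (_ : ∀ x, ‖f x‖ ≤ B),
      ∫ x, f x ∂mp - ∫ x, f x ∂mn = ∫ x, (a x : ℂ) * f x ∂m := by
    intro f hf B hB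
    have e1 : ∫ x, f x ∂mp = ∫ x, ((max (a x) 0 : ℝ) : ℂ) * f x ∂m := by
      rw [hmp, integral_withDensity_eq_integral_toReal_smul (by fun_prop) (by simp)]
      congr 1
    have e2 : ∫ x, f x ∂mn = ∫ x, ((max (-a x) 0 : ℝ) : ℂ) * f x ∂m := by
      rw [hmn, integral_withDensity_eq_integral_toReal_smul (by fun_prop) (by simp)]
      congr 1
    rw [e1, e2, ← integral_sub]
    · congr 1; ext x
      rw [← sub_mul, ← Complex.ofReal_sub]
      congr 2
      rcases le_total (a x) 0 with h | h
      · rw [max_eq_right h, max_eq_left (by linarith)]; ring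
      · rw [max_eq_left h, max_eq_right (by linarith)]; ring
    · exact (ha.pos_part.ofReal).mul_bdd (c := B) hf.aestronglyMeasurable (ae_of_all _ hB)
    · exact (ha.neg_part.ofReal).mul_bdd (c := B) hf.aestronglyMeasurable (ae_of_all _ hB)
  have hpos : ∀ u : ℝ, 0 < u → charFun (mp.map T) u = charFun (mn.map T) u := by
    intro u hu
    rw [charFun_apply_real, charFun_apply_real, integral_map hT.aemeasurable (by fun_prop),
      integral_map hT.aemeasurable (by fun_prop), ← sub_eq_zero]
    rw [key _ (by fun_prop) 1, h u hu]
    intro x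
    rw [← Complex.ofReal_mul, Complex.norm_exp_ofReal_mul_I]
  have hne : ∀ u : ℝ, u ≠ 0 → charFun (mp.map T) u = charFun (mn.map T) u := by
    intro u hu
    rcases lt_or_gt_of_ne hu with h | h
    · have := hpos (-u) (by linarith)
      rw [charFun_neg, charFun_neg] at this
      exact (starRingEnd ℂ).injective this
    · exact hpos u h
  have hall : charFun (mp.map T) = charFun (mn.map T) := by
    refine Continuous.ext_on (s := {0}ᶜ) (dense_compl_singleton 0) continuous_charFun
      continuous_charFun ?_
    intro u hu
    exact hne u hu
  have hm : mp.map T = mn.map T := Measure.ext_of_charFun hall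
  have h3 := key (fun x => (g (T x) : ℂ)) (by fun_prop) B (fun x => by simpa using hB (T x))
  have h4 : ∫ x, (g (T x) : ℂ) ∂mp = ∫ x, (g (T x) : ℂ) ∂mn := by
    rw [← integral_map (f := fun y => (g y : ℂ)) hT.aemeasurable
      (Measurable.aestronglyMeasurable (by fun_prop)), hm, integral_map hT.aemeasurable
      (Measurable.aestronglyMeasurable (by fun_prop))]
  rw [h4, sub_self] at h3
  have h5 : ((∫ x, a x * g (T x) ∂m : ℝ) : ℂ) = 0 := by
    rw [← integral_complex_ofReal, h3]
    congr 1; ext x; push_cast; rfl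
  exact_mod_cast h5
/-- The logarithmic derivative of the characteristic function. -/
lemma aux_deriv (μ : Measure ℝ) [IsProbabilityMeasure μ] (Y c a b : ℝ)
    (hXint : Integrable (fun x : ℝ => x) μ)
    (hφ : ∀ u : ℝ, charFun μ u = Complex.exp (((c * |u| ^ Y : ℝ) : ℂ) *
        ((a : ℂ) - Complex.I * ((Real.sign u : ℝ) : ℂ) * (b : ℂ)))) (u : ℝ) (hu : 0 < u) :
    ∫ x, (x : ℂ) * Complex.exp (u * x * Complex.I) ∂μ =
      - Complex.I * ((c * Y * u ^ (Y - 1) : ℝ) : ℂ) * ((a : ℂ) - Complex.I * (b : ℂ)) * charFun μ u := by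
  have h1 := iteratedDeriv_charFun (μ := μ) (n := 1) (t := u) (by
    have h0 : MemLp id 1 μ := memLp_one_iff_integrable.2 hXint
    simpa using h0)
  simp only [iteratedDeriv_one, pow_one] at h1
  have h2 : HasDerivAt (fun v : ℝ => Complex.exp (((c * v ^ Y : ℝ) : ℂ) *
        ((a : ℂ) - Complex.I * (b : ℂ)))) (Complex.exp (((c * u ^ Y : ℝ) : ℂ) *
        ((a : ℂ) - Complex.I * (b : ℂ))) * (((c * (Y * u ^ (Y - 1)) : ℝ) : ℂ) *
        ((a : ℂ) - Complex.I * (b : ℂ)))) u := by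
    have h3 : HasDerivAt (fun v : ℝ => c * v ^ Y) (c * (Y * u ^ (Y-1))) u :=
      (Real.hasDerivAt_rpow_const (Or.inl hu.ne')).const_mul c
    exact ((h3.ofReal_comp).mul_const _).cexp
  have h4 : (fun v : ℝ => Complex.exp (((c * v ^ Y : ℝ) : ℂ) *
        ((a : ℂ) - Complex.I * (b : ℂ)))) =ᶠ[𝓝 u] charFun μ := by
    filter_upwards [lt_mem_nhds hu] with v hv
    rw [hφ v, abs_of_pos hv, Real.sign_of_pos hv]
    simp
  have h5 := (h2.congr_of_eventuallyEq h4.symm).deriv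
  have h6 := h4.eq_of_nhds
  rw [h6] at h5
  rw [h5] at h1
  have : ∫ x, (x : ℂ) * Complex.exp (u * x * Complex.I) ∂μ = - Complex.I * (Complex.I * ∫ x, (x : ℂ) * Complex.exp (u * x * Complex.I) ∂μ) := by
    rw [← mul_assoc]; simp
  rw [this, ← h1]
  push_cast; ring
lemma aux_mvt (p m x y : ℝ) (hp : 0 < p) (hm : 0 < m) (hx : m ≤ x) (hy : m ≤ y) :
    |x ^ (-p) - y ^ (-p)| ≤ p * m ^ (-p - 1) * |x - y| := by
  have h := Convex.norm_image_sub_le_of_norm_hasDerivWithin_le (f := fun t : ℝ => t ^ (-p))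
    (f' := fun t => -p * t ^ (-p - 1)) (s := Ici m) (C := p * m ^ (-p - 1)) (x := y) (y := x)
    (fun t ht => (Real.hasDerivAt_rpow_const (Or.inl (lt_of_lt_of_le hm ht).ne')).hasDerivWithinAt)
    (fun t ht => by
      have ht0 : 0 < t := lt_of_lt_of_le hm ht
      rw [norm_mul, norm_neg, Real.norm_eq_abs, Real.norm_eq_abs, abs_of_pos hp,
        abs_of_pos (Real.rpow_pos_of_pos ht0 _)]
      gcongr ?_ * ?_
      exact Real.rpow_le_rpow_of_nonpos hm ht (by linarith))
    (convex_Ici m) hy hx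
  simpa using h

lemma aux_gamma_integrable (p b : ℝ) (hp : 0 < p) (hb : 0 < b) :
    IntegrableOn (fun t : ℝ => t ^ (p - 1) * Real.exp (-(b * t))) (Ioi 0) := by
  have := integrableOn_rpow_mul_exp_neg_mul_rpow (s := p - 1) (p := 1) (b := b) (by linarith) one_pos hb
  simpa using this

lemma aux_gamma_integrable' (p : ℝ) (hp : 0 < p) (r : ℂ) (hr : 0 < r.re) :
    IntegrableOn (fun t : ℝ => ((t ^ (p - 1) : ℝ) : ℂ) * Complex.exp (-(r * t))) (Ioi 0) := by
  refine (aux_gamma_integrable p r.re hp hr).mono' (Measurable.aestronglyMeasurable (by fun_prop)) ?_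
  filter_upwards [self_mem_ae_restrict measurableSet_Ioi] with t ht
  rw [norm_mul, Complex.norm_real, Complex.norm_exp, Real.norm_eq_abs,
    abs_of_nonneg (Real.rpow_nonneg (le_of_lt ht) _)]
  simp

lemma aux_gamma (p : ℝ) (hp : 0 < p) (r : ℂ) (hr : 0 < r.re) :
    ∫ t in Ioi (0:ℝ), ((t ^ (p - 1) : ℝ) : ℂ) * Complex.exp (-(r * t)) =
      (Real.Gamma p : ℂ) * r ^ (-(p : ℂ)) := by
  set F : ℂ → ℂ := fun r => ∫ t in Ioi (0:ℝ), ((t ^ (p - 1) : ℝ) : ℂ) * Complex.exp (-(r * t)) with hF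
  set S : Set ℂ := {z : ℂ | 0 < z.re} with hS
  have hSo : IsOpen S := isOpen_lt continuous_const Complex.continuous_re
  have hSc : IsPreconnected S := (convex_halfSpace_re_gt 0).isPreconnected
  have hFd : DifferentiableOn ℂ F S := by
    intro r0 hr0
    have hr0' : 0 < r0.re := hr0
    have := hasDerivAt_integral_of_dominated_loc_of_deriv_le (μ := volume.restrict (Ioi (0:ℝ)))
      (F := fun (z : ℂ) (t : ℝ) => ((t ^ (p - 1) : ℝ) : ℂ) * Complex.exp (-(z * t)))
      (F' := fun (z : ℂ) (t : ℝ) => ((t ^ (p - 1) : ℝ) : ℂ) * (Complex.exp (-(z * t)) * (-(1 * t))))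
      (x₀ := r0) (s := Metric.ball r0 (r0.re / 2)) (Metric.ball_mem_nhds _ (by linarith))
      (bound := fun t => t ^ ((p + 1) - 1) * Real.exp (-((r0.re / 2) * t)))
      (Eventually.of_forall fun z => Measurable.aestronglyMeasurable (by fun_prop))
      (aux_gamma_integrable' p hp r0 hr0')
      (Measurable.aestronglyMeasurable (by fun_prop))
      ?_ (aux_gamma_integrable (p + 1) (r0.re / 2) (by linarith) (by linarith)) ?_
    · exact this.2.differentiableAt.differentiableWithinAt
    · filter_upwards [self_mem_ae_restrict measurableSet_Ioi] with t ht z hz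
      have ht' : (0:ℝ) < t := ht
      have hzre : r0.re / 2 ≤ z.re := by
        have h1 : |(z - r0).re| ≤ ‖z - r0‖ := Complex.abs_re_le_norm _
        rw [Metric.mem_ball, dist_eq_norm] at hz
        have := abs_le.1 h1
        simp at this
        linarith [this.1]
      rw [norm_mul, norm_mul, Complex.norm_real, Complex.norm_exp, Real.norm_eq_abs,
        abs_of_nonneg (Real.rpow_nonneg ht'.le _), show p + 1 - 1 = (p - 1) + 1 by ring,
        Real.rpow_add_one ht'.ne']
      have : ‖(-(1 * t) : ℂ)‖ = t := by simp [abs_of_pos ht']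
      rw [this, mul_assoc, mul_comm t]
      gcongr
      simp
      nlinarith
    · filter_upwards with t z hz
      have := (((hasDerivAt_id z).mul_const (t : ℂ)).neg.cexp).const_mul ((t ^ (p - 1) : ℝ) : ℂ)
      simpa using this
  have hGd : DifferentiableOn ℂ (fun r : ℂ => (Real.Gamma p : ℂ) * r ^ (-(p : ℂ))) S := by
    intro z hz
    refine DifferentiableAt.differentiableWithinAt ?_
    have : z ∈ Complex.slitPlane := Or.inl hz
    exact (differentiableAt_const _).mul ((differentiableAt_id).cpow_const this)
  have heq : EqOn F (fun r : ℂ => (Real.Gamma p : ℂ) * r ^ (-(p : ℂ))) S := by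
    refine (hFd.analyticOnNhd hSo).eqOn_of_preconnected_of_frequently_eq (hGd.analyticOnNhd hSo) hSc
      (z₀ := 1) (by simp [hS]) ?_
    have hreal : ∀ x : ℝ, 0 < x → F x = (Real.Gamma p : ℂ) * (x : ℂ) ^ (-(p : ℂ)) := by
      intro x hx
      have h1 := Real.integral_rpow_mul_exp_neg_mul_Ioi hp hx
      have h2 : F x = ((∫ t in Ioi (0:ℝ), t ^ (p - 1) * Real.exp (-(x * t)) : ℝ) : ℂ) := by
        rw [hF, ← integral_complex_ofReal]
        refine integral_congr_ae (ae_of_all _ fun t => ?_)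
        simp
      rw [h2, h1, one_div, Real.inv_rpow hx.le, ← Real.rpow_neg hx.le]
      push_cast
      rw [Complex.ofReal_cpow hx.le]
      push_cast; ring
    have ht : Tendsto (fun n : ℕ => ((1 + 1 / ((n : ℝ) + 1) : ℝ) : ℂ)) atTop (𝓝[≠] 1) := by
      refine tendsto_nhdsWithin_iff.2 ⟨?_, ?_⟩
      · have h1 : Tendsto (fun n : ℕ => (1 + 1 / ((n : ℝ) + 1) : ℝ)) atTop (𝓝 (1 + 0)) :=
          tendsto_const_nhds.add tendsto_one_div_add_atTop_nhds_zero_nat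
        have h2 := (Complex.continuous_ofReal.tendsto (1 + 0 : ℝ)).comp h1
        simpa [Function.comp_def] using h2
      · refine Eventually.of_forall fun n => ?_
        have : (0:ℝ) < 1 / ((n : ℝ) + 1) := by positivity
        intro h
        have h' : ((1 + 1 / ((n : ℝ) + 1) : ℝ) : ℂ) = ((1 : ℝ) : ℂ) := by simpa using h
        have := Complex.ofReal_injective h'
        linarith
    refine ht.frequently (Frequently.of_forall fun n => ?_)
    exact hreal _ (by positivity)
  exact heq hr
noncomputable def kpos (Y s : ℝ) : ℝ := (Ioi (0:ℝ)).indicator (fun s => s ^ (1 - Y)) s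

noncomputable def kap (Y s : ℝ) : ℝ := kpos Y s - kpos Y (s - 1)

@[fun_prop]
lemma measurable_kpos (Y : ℝ) : Measurable (kpos Y) := by
  unfold kpos
  exact Measurable.indicator (by fun_prop) measurableSet_Ioi

@[fun_prop]
lemma measurable_kap (Y : ℝ) : Measurable (kap Y) := by
  unfold kap
  fun_prop

lemma kpos_of_pos (Y : ℝ) {s : ℝ} (hs : 0 < s) : kpos Y s = s ^ (1 - Y) := by
  simp [kpos, hs]

lemma kpos_of_nonpos (Y : ℝ) {s : ℝ} (hs : s ≤ 0) : kpos Y s = 0 := by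
  simp [kpos, hs]

lemma kpos_nonneg (Y s : ℝ) : 0 ≤ kpos Y s := by
  unfold kpos
  exact indicator_nonneg (fun s hs => Real.rpow_nonneg (le_of_lt hs) _) s

lemma kpos_integrableOn (Y b : ℝ) (hY : Y < 2) : IntegrableOn (kpos Y) (Iic b) := by
  unfold kpos
  rw [integrableOn_indicator_iff measurableSet_Ioi, inter_comm]
  rcases le_total 0 b with hb | hb
  · have := (intervalIntegral.intervalIntegrable_rpow' (a := 0) (b := b) (r := 1 - Y) (by linarith))
    rw [intervalIntegrable_iff_integrableOn_Ioc_of_le hb] at this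
    refine this.mono_set ?_
    intro x hx
    exact ⟨hx.2, hx.1⟩
  · have : Iic b ∩ Ioi (0:ℝ) = ∅ := by
      ext x; simp; intro h; linarith
    simp [this]

lemma aux_shift (f : ℝ → ℝ) (S : Set ℝ) (hf : IntegrableOn f S) :
    IntegrableOn (fun x => f (x - 1)) ((fun x => x - 1) ⁻¹' S) :=
  ((measurePreserving_sub_right volume (1:ℝ)).integrableOn_comp_preimage
    (MeasurableEquiv.subRight (1:ℝ)).measurableEmbedding).2 hf

lemma kap_bound (Y s : ℝ) (hY : 1 < Y) (hs : 1 < s) : |kap Y s| ≤ (Y - 1) * (s - 1) ^ (-Y) := by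
  unfold kap
  rw [kpos_of_pos Y (by linarith), kpos_of_pos Y (by linarith)]
  have := aux_mvt (Y - 1) (s - 1) s (s - 1) (by linarith) (by linarith) (by linarith) le_rfl
  rw [show -(Y - 1) = 1 - Y by ring, show 1 - Y - 1 = -Y by ring] at this
  simpa using this

lemma kap_integrable (Y : ℝ) (hY : 1 < Y) (hY2 : Y < 2) : Integrable (kap Y) := by
  have h1 : IntegrableOn (kap Y) (Iic 2) := by
    refine (kpos_integrableOn Y 2 hY2).sub ?_
    have := aux_shift _ _ (kpos_integrableOn Y 1 hY2)
    convert! this using 1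
    ext x; simp; constructor <;> intro h <;> linarith
  have h2 : IntegrableOn (kap Y) (Ioi 2) := by
    have h3 : IntegrableOn (fun s : ℝ => (s - 1) ^ (-Y)) (Ioi 2) := by
      have := aux_shift _ _ (integrableOn_Ioi_rpow_of_lt (a := -Y) (c := 1) (by linarith) one_pos)
      convert! this using 1
      ext x; simp; constructor <;> intro h <;> linarith
    refine (h3.const_mul (Y - 1)).mono' (Measurable.aestronglyMeasurable (by fun_prop)) ?_
    filter_upwards [self_mem_ae_restrict measurableSet_Ioi] with t ht
    have : (2:ℝ) < t := ht
    exact kap_bound Y t hY (by linarith)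
  have := h1.union h2
  rwa [Iic_union_Ioi, integrableOn_univ] at this

lemma kap_nonpos (Y s : ℝ) (hY : 1 < Y) (hs : 1 < s) : kap Y s ≤ 0 := by
  unfold kap
  rw [kpos_of_pos Y (by linarith), kpos_of_pos Y (by linarith)]
  have := Real.rpow_le_rpow_of_nonpos (x := s - 1) (y := s) (z := 1 - Y) (by linarith) (by linarith) (by linarith)
  linarith

lemma kap_of_nonpos (Y : ℝ) {s : ℝ} (hs : s ≤ 0) : kap Y s = 0 := by
  unfold kap
  rw [kpos_of_nonpos Y hs, kpos_of_nonpos Y (by linarith)]; simp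

lemma kap_laplace (Y : ℝ) (hY2 : Y < 2) (r : ℂ) (hr : 0 < r.re) :
    ∫ s : ℝ, (kap Y s : ℂ) * Complex.exp (-(r * s)) =
      (Real.Gamma (2 - Y) : ℂ) * r ^ (((Y - 2 : ℝ) : ℂ)) * (1 - Complex.exp (-r)) := by
  have hg := aux_gamma (2 - Y) (by linarith) r hr
  have hgi := aux_gamma_integrable' (2 - Y) (by linarith) r hr
  have e1 : ∀ s : ℝ, (kpos Y s : ℂ) * Complex.exp (-(r * s)) = (Ioi (0:ℝ)).indicator
      (fun t : ℝ => ((t ^ (2 - Y - 1) : ℝ) : ℂ) * Complex.exp (-(r * t))) s := by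
    intro s
    unfold kpos
    by_cases hs : s ∈ Ioi (0:ℝ)
    · rw [indicator_of_mem hs, indicator_of_mem hs]
      rw [show 2 - Y - 1 = 1 - Y by ring]
    · rw [indicator_of_notMem hs, indicator_of_notMem hs]; simp
  have hi : Integrable (fun s : ℝ => (kpos Y s : ℂ) * Complex.exp (-(r * s))) := by
    simp_rw [e1]
    exact (integrable_indicator_iff measurableSet_Ioi).2 hgi
  have hv : ∫ s : ℝ, (kpos Y s : ℂ) * Complex.exp (-(r * s)) =
      (Real.Gamma (2 - Y) : ℂ) * r ^ (((Y - 2 : ℝ) : ℂ)) := by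
    simp_rw [e1]
    rw [integral_indicator measurableSet_Ioi, hg]
    congr 2; push_cast; ring
  have hi1 := hi.comp_sub_right (1:ℝ)
  have e2 : ∀ s : ℝ, (kap Y s : ℂ) * Complex.exp (-(r * s)) =
      (kpos Y s : ℂ) * Complex.exp (-(r * s)) -
        Complex.exp (-r) * ((kpos Y (s - 1) : ℂ) * Complex.exp (-(r * ((s - 1 : ℝ) : ℂ)))) := by
    intro s
    unfold kap
    have : Complex.exp (-(r * s)) = Complex.exp (-r) * Complex.exp (-(r * ((s - 1 : ℝ) : ℂ))) := by
      rw [← Complex.exp_add]; congr 1; push_cast; ring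
    rw [show Complex.exp (-r) * ((kpos Y (s - 1) : ℂ) * Complex.exp (-(r * ((s - 1 : ℝ) : ℂ)))) = (kpos Y (s - 1) : ℂ) *  Complex.exp (-(r * s)) by rw [this]; ring]
    push_cast; ring
  simp_rw [e2]
  rw [integral_sub hi (hi1.const_mul _), integral_const_mul,
    integral_sub_right_eq_self (fun s : ℝ => (kpos Y s : ℂ) * Complex.exp (-(r * s))) (1:ℝ), hv]
  ring

lemma kap_fourier (Y : ℝ) (hY : 1 < Y) (hY2 : Y < 2) (u : ℝ) (hu : 0 < u) :
    ∫ s : ℝ, (kap Y s : ℂ) * Complex.exp (u * s * Complex.I) =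
      (Real.Gamma (2 - Y) : ℂ) * (-(u * Complex.I)) ^ (((Y - 2 : ℝ) : ℂ)) *
        (1 - Complex.exp (u * Complex.I)) := by
  have ht : Tendsto (fun n : ℕ => (1 / ((n : ℝ) + 1) : ℝ)) atTop (𝓝 0) :=
    tendsto_one_div_add_atTop_nhds_zero_nat
  have htc : Tendsto (fun n : ℕ => ((1 / ((n : ℝ) + 1) : ℝ) : ℂ) - u * Complex.I) atTop
      (𝓝 (-(u * Complex.I))) := by
    have h2 := ((Complex.continuous_ofReal.tendsto (0 : ℝ)).comp ht).sub_const (u * Complex.I)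
    simpa [Function.comp_def] using h2
  have hL : Tendsto (fun n : ℕ => ∫ s : ℝ, (kap Y s : ℂ) *
      Complex.exp (-((((1 / ((n : ℝ) + 1) : ℝ) : ℂ) - u * Complex.I) * s))) atTop
      (𝓝 (∫ s : ℝ, (kap Y s : ℂ) * Complex.exp (u * s * Complex.I))) := by
    refine tendsto_integral_of_dominated_convergence (fun s => |kap Y s|)
      (fun n => Measurable.aestronglyMeasurable (by fun_prop)) (kap_integrable Y hY hY2).abs ?_ ?_
    · intro n
      refine ae_of_all _ fun s => ?_
      rcases le_total s 0 with hs | hs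
      · simp [kap_of_nonpos Y hs]
      · rw [norm_mul, Complex.norm_real, Complex.norm_exp, Real.norm_eq_abs]
        refine mul_le_of_le_one_right (abs_nonneg _) ?_
        rw [Real.exp_le_one_iff]
        have h0 : (0:ℝ) ≤ 1 / ((n:ℝ) + 1) := by positivity
        generalize 1 / ((n:ℝ) + 1) = ε at h0
        have : (0:ℝ) ≤ ε * s := by positivity
        simpa using this
    · refine ae_of_all _ fun s => ?_
      refine Tendsto.const_mul _ ?_
      have h3 : Continuous fun z : ℂ => Complex.exp (-(z * s)) := by fun_prop
      have h4 := (h3.tendsto (-(u * Complex.I))).comp htc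
      have h5 : Complex.exp (u * s * Complex.I) = Complex.exp (-(-(u * Complex.I) * s)) := by
        congr 1; ring
      rw [h5]
      exact h4
  have hR : Tendsto (fun n : ℕ => (Real.Gamma (2 - Y) : ℂ) *
      ((((1 / ((n : ℝ) + 1) : ℝ) : ℂ) - u * Complex.I)) ^ (((Y - 2 : ℝ) : ℂ)) *
        (1 - Complex.exp (-((((1 / ((n : ℝ) + 1) : ℝ) : ℂ) - u * Complex.I))))) atTop
      (𝓝 ((Real.Gamma (2 - Y) : ℂ) * (-(u * Complex.I)) ^ (((Y - 2 : ℝ) : ℂ)) *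
        (1 - Complex.exp (-(-(u * Complex.I)))))) := by
    have hc : ContinuousAt (fun z : ℂ => (Real.Gamma (2 - Y) : ℂ) * z ^ (((Y - 2 : ℝ) : ℂ)) *
        (1 - Complex.exp (-z))) (-(u * Complex.I)) := by
      have hs : (-(u * Complex.I)) ∈ Complex.slitPlane := by
        right; simp [hu.ne']
      have h1 : ContinuousAt (fun z : ℂ => z ^ (((Y - 2 : ℝ) : ℂ))) (-(u * Complex.I)) :=
        continuousAt_id.cpow continuousAt_const hs
      exact (continuousAt_const.mul h1).mul (by fun_prop)
    exact hc.tendsto.comp htc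
  rw [neg_neg] at hR
  refine tendsto_nhds_unique hL (hR.congr fun n => ?_)
  refine (kap_laplace Y hY2 _ ?_).symm
  have h0 : (0:ℝ) < 1 / ((n:ℝ) + 1) := by positivity
  generalize 1 / ((n:ℝ) + 1) = ε at h0
  simpa using h0
lemma aux_cpow (Y u : ℝ) (hu : 0 < u) :
    (-(u * Complex.I)) ^ (((Y - 2 : ℝ) : ℂ)) =
      -((u ^ (Y - 2) : ℝ) : ℂ) * (((Real.cos (Real.pi * Y / 2) : ℝ) : ℂ)
          - Complex.I * ((Real.sin (Real.pi * Y / 2) : ℝ) : ℂ)) := by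
  have h0 : (-(u * Complex.I)) = (u : ℂ) * (-Complex.I) := by ring
  have hne : (u : ℂ) * (-Complex.I) ≠ 0 := by simp [hu.ne']
  rw [h0, Complex.cpow_def_of_ne_zero hne, Complex.log_ofReal_mul hu (by simp), Complex.log_neg_I,
    Real.rpow_def_of_pos hu]
  have e1 : ((Real.log u : ℂ) + -(Real.pi / 2) * Complex.I) * ((Y - 2 : ℝ) : ℂ) =
      ((Real.log u * (Y - 2) : ℝ) : ℂ) + (((-(Real.pi * Y / 2) : ℝ) : ℂ) * Complex.I + Real.pi * Complex.I) := by
    push_cast; ring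
  rw [e1, Complex.exp_add, Complex.exp_add, Complex.exp_pi_mul_I, Complex.exp_mul_I,
    ← Complex.ofReal_cos, ← Complex.ofReal_sin, Real.cos_neg, Real.sin_neg]
  push_cast
  ring

lemma aux_Gamma_const (Y : ℝ) (hY : 1 < Y) :
    Real.Gamma (-Y) * Y = Real.Gamma (2 - Y) / (Y - 1) := by
  have h1 := Real.Gamma_add_one (s := -Y) (by linarith)
  by_cases h : Y = 1
  · linarith
  have h2 := Real.Gamma_add_one (s := -Y + 1) (by intro h'; apply h; linarith)
  rw [show 2 - Y = -Y + 1 + 1 by ring, h2, h1]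
  have : Y - 1 ≠ 0 := by intro h'; linarith
  field_simp
  ring

/-- The Stein type identity of the spectrally positive stable law. -/
lemma aux_stein (μ : Measure ℝ) [IsProbabilityMeasure μ] (Y C : ℝ) (hY : 1 < Y) (hY2 : Y < 2)
    (hXint : Integrable (fun x : ℝ => x) μ)
    (hφ : ∀ u : ℝ, charFun μ u = Complex.exp (((C * Real.Gamma (-Y) * |u| ^ Y : ℝ) : ℂ) *
        (((Real.cos (Real.pi * Y / 2) : ℝ) : ℂ)
          - Complex.I * ((Real.sign u : ℝ) : ℂ) * ((Real.sin (Real.pi * Y / 2) : ℝ) : ℂ))))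
    (g : ℝ → ℝ) (hg : Measurable g) (B : ℝ) (hB : ∀ x, |g x| ≤ B) :
    ∫ x, x * (∫ s in Ioc (0:ℝ) 1, g (x + s)) ∂μ =
      - (C / (Y - 1)) * ∫ x, (∫ s, kap Y s * g (x + s)) ∂μ := by
  set K := C / (Y - 1) with hK
  set ι : ℝ → ℝ := (Ioc (0:ℝ) 1).indicator (fun _ => 1) with hι
  have hιm : Measurable ι := measurable_const.indicator measurableSet_Ioc
  have hιi : Integrable ι := by
    rw [hι, integrable_indicator_iff measurableSet_Ioc]
    simp
  have hki := kap_integrable Y hY hY2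
  have hi1 : Integrable (fun p : ℝ × ℝ => p.1 * ι p.2) (μ.prod volume) := hXint.mul_prod hιi
  have hi2 : Integrable (fun p : ℝ × ℝ => 1 * (K * kap Y p.2)) (μ.prod volume) :=
    (integrable_const (1:ℝ)).mul_prod (hki.const_mul K)
  have hbd : ∀ f : ℝ × ℝ → ℝ, Integrable f (μ.prod volume) →
      Integrable (fun p => f p * g (p.1 + p.2)) (μ.prod volume) := by
    intro f hf
    exact hf.mul_bdd (c := B) (Measurable.aestronglyMeasurable (by fun_prop))
      (ae_of_all _ fun p => hB _)
  have main := aux_unique (μ.prod volume) (fun p : ℝ × ℝ => p.1 * ι p.2 + 1 * (K * kap Y p.2))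
    (fun p => p.1 + p.2) (hi1.add hi2) (by fun_prop) (by fun_prop) ?_ g hg B hB
  · have e1 : ∫ p : ℝ × ℝ, (p.1 * ι p.2) * g (p.1 + p.2) ∂(μ.prod volume) =
        ∫ x, x * (∫ s in Ioc (0:ℝ) 1, g (x + s)) ∂μ := by
      rw [integral_prod _ (hbd _ hi1)]
      refine integral_congr_ae (ae_of_all _ fun x => ?_)
      simp only
      rw [← integral_const_mul, ← integral_indicator measurableSet_Ioc]
      refine integral_congr_ae (ae_of_all _ fun s => ?_)
      simp only [hι, indicator]
      split_ifs <;> simp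
    have e2 : ∫ p : ℝ × ℝ, (1 * (K * kap Y p.2)) * g (p.1 + p.2) ∂(μ.prod volume) =
        K * ∫ x, (∫ s, kap Y s * g (x + s)) ∂μ := by
      rw [integral_prod _ (hbd _ hi2), ← integral_const_mul]
      refine integral_congr_ae (ae_of_all _ fun x => ?_)
      simp only
      rw [← integral_const_mul]
      refine integral_congr_ae (ae_of_all _ fun s => ?_)
      simp only
      ring
    simp_rw [add_mul] at main
    rw [integral_add (hbd _ hi1) (hbd _ hi2), e1, e2] at main
    linarith
  · intro u hu
    have hbd2 : ∀ f : ℝ × ℝ → ℝ, Integrable f (μ.prod volume) →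
        Integrable (fun p => (f p : ℂ) * Complex.exp (u * ((p.1 + p.2 : ℝ) : ℂ) * Complex.I)) (μ.prod volume) := by
      intro f hf
      refine hf.ofReal.mul_bdd (c := 1) (Measurable.aestronglyMeasurable (by fun_prop))
        (ae_of_all _ fun p => ?_)
      rw [← Complex.ofReal_mul, Complex.norm_exp_ofReal_mul_I]
    have e1 : ∫ p : ℝ × ℝ, ((p.1 * ι p.2 : ℝ) : ℂ) * Complex.exp (u * ((p.1 + p.2 : ℝ) : ℂ) * Complex.I) ∂(μ.prod volume)
        = (∫ x, (x : ℂ) * Complex.exp (u * x * Complex.I) ∂μ) *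
          (∫ s, (ι s : ℂ) * Complex.exp (u * s * Complex.I)) := by
      rw [← integral_prod_mul]
      refine integral_congr_ae (ae_of_all _ fun p => ?_)
      simp only
      rw [show (u * ((p.1 + p.2 : ℝ) : ℂ) * Complex.I) = u * p.1 * Complex.I + u * p.2 * Complex.I by
        push_cast; ring, Complex.exp_add]
      push_cast; ring
    have e2 : ∫ p : ℝ × ℝ, ((1 * (K * kap Y p.2) : ℝ) : ℂ) * Complex.exp (u * ((p.1 + p.2 : ℝ) : ℂ) * Complex.I) ∂(μ.prod volume)
        = (∫ x, Complex.exp (u * x * Complex.I) ∂μ) *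
          (∫ s, (K : ℂ) * ((kap Y s : ℂ) * Complex.exp (u * s * Complex.I))) := by
      rw [← integral_prod_mul]
      refine integral_congr_ae (ae_of_all _ fun p => ?_)
      simp only
      rw [show (u * ((p.1 + p.2 : ℝ) : ℂ) * Complex.I) = u * p.1 * Complex.I + u * p.2 * Complex.I by
        push_cast; ring, Complex.exp_add]
      push_cast; ring
    have e3 : ∫ s, (ι s : ℂ) * Complex.exp (u * s * Complex.I) =
        (Complex.exp (u * Complex.I) - 1) / (u * Complex.I) := by
      have h1 := integral_exp_mul_complex (a := 0) (b := 1) (c := u * Complex.I) (by simp [hu.ne'])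
      rw [intervalIntegral.integral_of_le zero_le_one, ← integral_indicator measurableSet_Ioc] at h1
      simp only [Complex.ofReal_one, mul_one, Complex.ofReal_zero, mul_zero, Complex.exp_zero] at h1
      rw [← h1]
      refine integral_congr_ae (ae_of_all _ fun s => ?_)
      simp only [hι, indicator]
      split_ifs
      · simp only [Complex.ofReal_one, one_mul]; congr 1; ring
      · simp
    simp only [Complex.ofReal_add _ (1 * (K * _)), add_mul]
    rw [integral_add (hbd2 _ hi1) (hbd2 _ hi2), e1, e2, e3, integral_const_mul,
      kap_fourier Y hY hY2 u hu, aux_deriv μ Y (C * Real.Gamma (-Y)) _ _ hXint hφ u hu,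
      ← charFun_apply_real, aux_cpow Y u hu]
    have hu' : (u : ℂ) ≠ 0 := by exact_mod_cast hu.ne'
    have hr : (C * Real.Gamma (-Y) * Y * u ^ (Y - 1)) = K * Real.Gamma (2 - Y) * u ^ (Y - 2) * u := by
      rw [mul_assoc C, aux_Gamma_const Y hY, hK, show Y - 1 = (Y - 2) + 1 by ring,
        Real.rpow_add_one hu.ne']
      ring
    rw [hr]
    push_cast
    field_simp
    ring
lemma kap_approx (Y s z m : ℝ) (hY : 1 < Y) (hm : 0 < m) (hs : m ≤ s - 1) (hz : m ≤ z) :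
    |-kap Y s - (Y - 1) * z ^ (-Y)| ≤ (Y - 1) * (Y * m ^ (-Y - 1) * (1 + |s - z|)) := by
  have h := Convex.norm_image_sub_le_of_norm_hasDerivWithin_le
    (f := fun t : ℝ => t ^ (1 - Y) + (Y - 1) * z ^ (-Y) * t)
    (f' := fun t => (1 - Y) * t ^ (1 - Y - 1) + (Y - 1) * z ^ (-Y) * 1) (s := Icc (s - 1) s)
    (C := (Y - 1) * (Y * m ^ (-Y - 1) * (1 + |s - z|))) (x := s) (y := s - 1)
    (fun t ht => by
      have ht0 : 0 < t := by linarith [ht.1]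
      exact ((Real.hasDerivAt_rpow_const (Or.inl ht0.ne')).add
        ((hasDerivAt_id t).const_mul _)).hasDerivWithinAt)
    (fun t ht => by
      have ht0 : m ≤ t := by linarith [ht.1]
      have e : (1 - Y) * t ^ (1 - Y - 1) + (Y - 1) * z ^ (-Y) * 1 =
          -((Y - 1) * (t ^ (-Y) - z ^ (-Y))) := by
        rw [show 1 - Y - 1 = -Y by ring]; ring
      rw [e, norm_neg, norm_mul, Real.norm_eq_abs, Real.norm_eq_abs, abs_of_pos (by linarith : 0 < Y - 1)]
      refine mul_le_mul_of_nonneg_left ?_ (by linarith)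
      refine (aux_mvt Y m t z (by linarith) hm ht0 hz).trans ?_
      refine mul_le_mul_of_nonneg_left ?_ (by positivity)
      calc |t - z| = |(t - s) + (s - z)| := by ring_nf
        _ ≤ |t - s| + |s - z| := abs_add_le _ _
        _ ≤ 1 + |s - z| := by
          gcongr
          rw [abs_le]; constructor <;> linarith [ht.1, ht.2])
    (convex_Icc _ _) (by constructor <;> linarith) (by constructor <;> linarith)
  have e2 : ‖s - 1 - s‖ = 1 := by
    rw [show s - 1 - s = -1 by ring]; simp
  rw [e2, mul_one] at h
  unfold kap
  rw [kpos_of_pos Y (by linarith), kpos_of_pos Y (by linarith)]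
  rw [Real.norm_eq_abs] at h
  convert h using 2
  ring

lemma aux_J (Y w x : ℝ) (hY : 1 < Y) (hY2 : Y < 2) (hw : 4 ≤ w) (hx : x ≤ w / 2) :
    |-(∫ s, kap Y s * (Ioi w).indicator (fun z : ℝ => 1 / z) (x + s)) - (Y - 1) / Y * w ^ (-Y)| ≤
      (Y - 1) * Y * 4 ^ (Y + 1) * (1 + |x|) * w ^ (-Y - 1) := by
  have hw0 : 0 < w := by linarith
  have e1 : ∫ s, kap Y s * (Ioi w).indicator (fun z : ℝ => 1 / z) (x + s) =
      ∫ z in Ioi w, kap Y (z - x) * (1 / z) := by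
    rw [← integral_indicator measurableSet_Ioi,
      ← integral_sub_right_eq_self (fun s => kap Y s * (Ioi w).indicator (fun z : ℝ => 1 / z) (x + s)) x]
    refine integral_congr_ae (ae_of_all _ fun z => ?_)
    simp only [add_sub_cancel]
    by_cases h : z ∈ Ioi w
    · rw [indicator_of_mem h, indicator_of_mem h]
    · rw [indicator_of_notMem h, indicator_of_notMem h, mul_zero]
  have e2 : (Y - 1) / Y * w ^ (-Y) = ∫ z in Ioi w, (Y - 1) * z ^ (-Y - 1) := by
    rw [integral_const_mul, integral_Ioi_rpow_of_lt (by linarith) hw0]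
    rw [show -Y - 1 + 1 = -Y by ring]
    have : Y ≠ 0 := by linarith
    field_simp
  have i1 : IntegrableOn (fun z => kap Y (z - x) * (1 / z)) (Ioi w) := by
    have h := (kap_integrable Y hY hY2).comp_sub_right x
    refine h.integrableOn.mul_bdd (c := 1) (Measurable.aestronglyMeasurable (by fun_prop)) ?_
    filter_upwards [self_mem_ae_restrict measurableSet_Ioi] with z hz
    have hz' : w < z := hz
    have : (0:ℝ) < z := by linarith
    rw [Real.norm_eq_abs, abs_of_pos (by positivity), div_le_one this]
    linarith
  have i2 : IntegrableOn (fun z : ℝ => (Y - 1) * z ^ (-Y - 1)) (Ioi w) :=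
    (integrableOn_Ioi_rpow_of_lt (by linarith) hw0).const_mul _
  have i3 : IntegrableOn (fun z : ℝ => z ^ (-Y - 2)) (Ioi w) :=
    (integrableOn_Ioi_rpow_of_lt (by linarith) hw0)
  rw [e1, e2, ← integral_neg, ← integral_sub i1.fun_neg i2]
  have hb : ∀ᵐ z ∂(volume.restrict (Ioi w)), ‖-(kap Y (z - x) * (1 / z)) - (Y - 1) * z ^ (-Y - 1)‖ ≤
      ((Y - 1) * Y * 4 ^ (Y + 1) * (1 + |x|)) * z ^ (-Y - 2) := by
    filter_upwards [self_mem_ae_restrict measurableSet_Ioi] with z hz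
    have hz' : w < z := hz
    have hz0 : (0:ℝ) < z := by linarith
    have h := kap_approx Y (z - x) z (z / 4) hY (by linarith) (by linarith) (by linarith)
    have e3 : -(kap Y (z - x) * (1 / z)) - (Y - 1) * z ^ (-Y - 1) =
        (-kap Y (z - x) - (Y - 1) * z ^ (-Y)) * (1 / z) := by
      rw [Real.rpow_sub_one hz0.ne']; ring
    rw [e3, norm_mul, Real.norm_eq_abs, Real.norm_eq_abs, abs_of_pos (a := 1 / z) (by positivity)]
    have e4 : (z / 4) ^ (-Y - 1) = 4 ^ (Y + 1) * z ^ (-Y - 1) := by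
      rw [Real.div_rpow hz0.le (by norm_num), div_eq_mul_inv, ← Real.rpow_neg (by norm_num)]
      rw [show -(-Y - 1) = Y + 1 by ring]; ring
    have e5 : z ^ (-Y - 2) = z ^ (-Y - 1) * (1 / z) := by
      rw [show -Y - 2 = -Y - 1 - 1 by ring, Real.rpow_sub_one hz0.ne']; ring
    rw [e4, show z - x - z = -x by ring, abs_neg] at h
    calc _ ≤ (Y - 1) * (Y * (4 ^ (Y + 1) * z ^ (-Y - 1)) * (1 + |x|)) * (1 / z) := by gcongr
      _ = _ := by rw [e5]; ring
  have hfin := norm_integral_le_of_norm_le (i3.const_mul _) hb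
  rw [integral_const_mul, integral_Ioi_rpow_of_lt (by linarith) hw0] at hfin
  refine hfin.trans ?_
  have h0 : 0 ≤ (Y - 1) * Y * 4 ^ (Y + 1) * (1 + |x|) := by
    have : 0 < Y - 1 := by linarith
    positivity
  refine mul_le_mul_of_nonneg_left ?_ h0
  rw [show -Y - 2 + 1 = -Y - 1 by ring, show -w ^ (-Y - 1) / (-Y - 1) = w ^ (-Y - 1) / (Y + 1) by
    rw [show -Y - 1 = -(Y + 1) by ring, neg_div_neg_eq]]
  exact div_le_self (by positivity) (by linarith)

lemma aux_meas (g : ℝ → ℝ) (hg : Measurable g) (k : ℝ → ℝ) (hk : Measurable k) (ν : Measure ℝ) [SFinite ν] :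
    Measurable (fun x => ∫ s, k s * g (x + s) ∂ν) := by
  have : StronglyMeasurable (fun p : ℝ × ℝ => k p.2 * g (p.1 + p.2)) :=
    Measurable.stronglyMeasurable (by fun_prop)
  exact (this.integral_prod_right (ν := ν)).measurable

lemma aux_meas' (g : ℝ → ℝ) (hg : Measurable g) :
    Measurable (fun x => ∫ s in Ioc (0:ℝ) 1, g (x + s)) := by
  simpa using aux_meas g hg (fun _ => 1) measurable_const (volume.restrict (Ioc (0:ℝ) 1))

/-- The right tail, smoothed. -/
lemma aux_Phi (μ : Measure ℝ) [IsProbabilityMeasure μ] (Y D : ℝ) (hY : 1 < Y) (hY2 : Y < 2)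
    (hXint : Integrable (fun x : ℝ => x) μ) (hD : 0 ≤ D)
    (ht : ∀ r : ℝ, 0 < r → μ.real {x | r < |x|} ≤ D * r ^ (-Y)) :
    ∃ A : ℝ, 0 ≤ A ∧ ∀ w : ℝ, 4 ≤ w →
      |-(∫ x, (∫ s, kap Y s * (Ioi w).indicator (fun z : ℝ => 1 / z) (x + s)) ∂μ)
        - (Y - 1) / Y * w ^ (-Y)| ≤ A * w ^ (-Y - 1) := by
  set N := ∫ s, |kap Y s| with hN
  have hN0 : 0 ≤ N := integral_nonneg fun s => abs_nonneg _
  have hki := kap_integrable Y hY hY2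
  have hY1 : 0 < Y - 1 := by linarith
  set c0 := (Y - 1) * Y * 4 ^ (Y + 1) with hc0
  have hc00 : 0 ≤ c0 := by positivity
  have hE0 : 0 ≤ ∫ x, |x| ∂μ := integral_nonneg fun s => abs_nonneg _
  refine ⟨c0 * (1 + ∫ x, |x| ∂μ) + (N + 1) * (D * 2 ^ Y), by positivity, fun w hw => ?_⟩
  have hw0 : 0 < w := by linarith
  set g := (Ioi w).indicator (fun z : ℝ => 1 / z) with hg
  have hgm : Measurable g := Measurable.indicator (by fun_prop) measurableSet_Ioi
  have hgb : ∀ x, |g x| ≤ 1 / w := by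
    intro x
    by_cases h : x ∈ Ioi w
    · have h' : w < x := h
      have hx0 : 0 < x := by linarith
      rw [hg, indicator_of_mem h, abs_of_pos (by positivity)]
      gcongr
    · rw [hg, indicator_of_notMem h]; simp; positivity
  set J := fun x => ∫ s, kap Y s * g (x + s) with hJ
  have hJm : Measurable J := aux_meas g hgm (kap Y) (by fun_prop) volume
  have hJb : ∀ x, |J x| ≤ N / w := by
    intro x
    have h1 := norm_integral_le_of_norm_le (f := fun s => kap Y s * g (x + s)) (hki.abs.mul_const (1 / w))
      (ae_of_all _ fun s => by
        rw [norm_mul, Real.norm_eq_abs, Real.norm_eq_abs]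
        exact mul_le_mul_of_nonneg_left (hgb _) (abs_nonneg _))
    rw [integral_mul_const] at h1
    calc |J x| ≤ N * (1 / w) := h1
      _ = N / w := by ring
  have hJi : Integrable J μ := Integrable.of_bound hJm.aestronglyMeasurable (N / w) (ae_of_all _ hJb)
  set L := (Y - 1) / Y * w ^ (-Y) with hL
  have hL0 : 0 ≤ L := by positivity
  have hL1 : L ≤ 1 / w := by
    calc L ≤ 1 * w ^ (-Y) := by
          rw [hL]; gcongr; rw [div_le_one (by linarith)]; linarith
      _ ≤ 1 * w ^ (-1 : ℝ) := by
          gcongr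
          · linarith
      _ = 1 / w := by rw [Real.rpow_neg_one]; ring
  set S : Set ℝ := {x | w / 2 < |x|} with hS
  have hSm : MeasurableSet S := measurableSet_lt measurable_const (by fun_prop)
  have hpt : ∀ x, ‖-J x - L‖ ≤ c0 * w ^ (-Y - 1) * (1 + |x|) + S.indicator (fun _ => (N + 1) / w) x := by
    intro x
    by_cases hx : x ≤ w / 2
    · have h1 := aux_J Y w x hY hY2 hw hx
      have h2 : 0 ≤ S.indicator (fun _ => (N + 1) / w) x := indicator_nonneg (fun _ _ => by positivity) _
      rw [Real.norm_eq_abs]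
      have h3 : |-J x - L| ≤ (Y - 1) * Y * 4 ^ (Y + 1) * (1 + |x|) * w ^ (-Y - 1) := h1
      have h4 : c0 * w ^ (-Y - 1) * (1 + |x|) = (Y - 1) * Y * 4 ^ (Y + 1) * (1 + |x|) * w ^ (-Y - 1) := by
        rw [hc0]; ring
      linarith
    · push Not at hx
      have hxS : x ∈ S := lt_of_lt_of_le hx (le_abs_self x)
      rw [indicator_of_mem hxS, Real.norm_eq_abs]
      have h2 : 0 ≤ c0 * w ^ (-Y - 1) * (1 + |x|) := by positivity
      have h3 := abs_sub (-J x) L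
      rw [abs_neg, abs_of_nonneg hL0] at h3
      have h4 := hJb x
      have h5 : (N + 1) / w = N / w + 1 / w := by ring
      linarith
  have h1i : Integrable (fun x : ℝ => c0 * w ^ (-Y - 1) * (1 + |x|)) μ :=
    ((integrable_const 1).add hXint.abs).const_mul _
  have hbi : Integrable (fun x => c0 * w ^ (-Y - 1) * (1 + |x|) + S.indicator (fun _ => (N + 1) / w) x) μ :=
    h1i.add ((integrable_const _).indicator hSm)
  have hfin := norm_integral_le_of_norm_le hbi (ae_of_all _ hpt)
  rw [integral_sub hJi.fun_neg (integrable_const _), integral_neg, integral_const, probReal_univ, one_smul] at hfin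
  refine hfin.trans ?_
  rw [integral_add h1i ((integrable_const _).indicator hSm),
    integral_const_mul, integral_add (integrable_const _) hXint.abs, integral_const, probReal_univ, one_smul,
    integral_indicator hSm, setIntegral_const]
  have h6 := ht (w / 2) (by linarith)
  have e6 : (w / 2) ^ (-Y) = 2 ^ Y * w ^ (-Y) := by
    rw [Real.div_rpow hw0.le (by norm_num), div_eq_mul_inv, ← Real.rpow_neg (by norm_num), neg_neg]; ring
  rw [e6] at h6
  have e7 : w ^ (-Y - 1) = w ^ (-Y) / w := Real.rpow_sub_one hw0.ne' _
  rw [smul_eq_mul]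
  calc _ ≤ c0 * w ^ (-Y - 1) * (1 + ∫ x, |x| ∂μ) + (D * (2 ^ Y * w ^ (-Y))) * ((N + 1) / w) := by
        gcongr
    _ = _ := by rw [e7]; ring
lemma aux_right (μ : Measure ℝ) [IsProbabilityMeasure μ] (Y C D : ℝ) (hY : 1 < Y) (hY2 : Y < 2)
    (hC : 0 < C)
    (hXint : Integrable (fun x : ℝ => x) μ) (hD : 0 ≤ D)
    (ht : ∀ r : ℝ, 0 < r → μ.real {x | r < |x|} ≤ D * r ^ (-Y))
    (hst : ∀ (g : ℝ → ℝ) (_ : Measurable g) (B : ℝ) (_ : ∀ x, |g x| ≤ B),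
      ∫ x, x * (∫ s in Ioc (0:ℝ) 1, g (x + s)) ∂μ =
      - (C / (Y - 1)) * ∫ x, (∫ s, kap Y s * g (x + s)) ∂μ) :
    ∃ A : ℝ, 0 ≤ A ∧ ∀ w : ℝ, 0 < w →
      |μ.real (Ici w) - C / Y * w ^ (-Y)| ≤ A * w ^ (-Y - 1) := by
  obtain ⟨A1, hA1, hPhi⟩ := aux_Phi μ Y D hY hY2 hXint hD ht
  have hY1 : 0 < Y - 1 := by linarith
  set K := C / (Y - 1) with hK
  have hK0 : 0 < K := by positivity
  have hKY : K * ((Y - 1) / Y) = C / Y := by rw [hK]; field_simp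
  set Φ : ℝ → ℝ := fun w => ∫ x, x * (∫ s in Ioc (0:ℝ) 1, (Ioi w).indicator (fun z : ℝ => 1 / z) (x + s)) ∂μ with hΦ
  have hb : ∀ w : ℝ, 4 ≤ w → |Φ w - C / Y * w ^ (-Y)| ≤ K * A1 * w ^ (-Y - 1) ∧
      Φ w ≤ μ.real (Ici (w - 1)) ∧ (1 - 1 / w) * μ.real (Ici w) ≤ Φ w := by
    intro w hw
    have hw0 : 0 < w := by linarith
    set g := (Ioi w).indicator (fun z : ℝ => 1 / z) with hg
    have hgm : Measurable g := Measurable.indicator (by fun_prop) measurableSet_Ioi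
    have hg0 : ∀ x, 0 ≤ g x := by
      intro x
      refine indicator_nonneg (fun z hz => ?_) x
      have : w < z := hz
      have : 0 < z := by linarith
      positivity
    have hgb : ∀ x, |g x| ≤ 1 / w := by
      intro x
      by_cases h : x ∈ Ioi w
      · have h' : w < x := h
        have hx0 : 0 < x := by linarith
        rw [hg, indicator_of_mem h, abs_of_pos (by positivity)]
        gcongr
      · rw [hg, indicator_of_notMem h]; simp; positivity
    have hgi : ∀ x, IntegrableOn (fun s => g (x + s)) (Ioc (0:ℝ) 1) := by
      intro x
      exact Integrable.of_bound (Measurable.aestronglyMeasurable (by fun_prop)) (1 / w)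
        (ae_of_all _ fun s => hgb _)
    have hci : ∀ c : ℝ, IntegrableOn (fun _ : ℝ => c) (Ioc (0:ℝ) 1) := fun c => by simp
    set f := fun x => ∫ s in Ioc (0:ℝ) 1, g (x + s) with hf
    have hfm : Measurable f := aux_meas' g hgm
    have hf0 : ∀ x, 0 ≤ f x := fun x => integral_nonneg fun s => hg0 _
    have hfz : ∀ x, x < w - 1 → f x = 0 := by
      intro x hx
      rw [hf]
      refine setIntegral_eq_zero_of_forall_eq_zero fun s hs => ?_
      refine indicator_of_notMem ?_ _
      simp only [mem_Ioi, not_lt]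
      linarith [hs.2]
    have hfu : ∀ x, w - 1 ≤ x → f x ≤ 1 / x := by
      intro x hx
      have hx0 : 0 < x := by linarith
      have h1 : f x ≤ ∫ s in Ioc (0:ℝ) 1, 1 / x := by
        refine setIntegral_mono_on (hgi x) (hci _) measurableSet_Ioc fun s hs => ?_
        by_cases h : x + s ∈ Ioi w
        · rw [hg, indicator_of_mem h]
          have := hs.1
          gcongr
          linarith
        · rw [hg, indicator_of_notMem h]; positivity
      simpa using h1
    have hfl : ∀ x, w ≤ x → 1 / (x + 1) ≤ f x := by
      intro x hx
      have hx0 : 0 < x := by linarith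
      have h1 : ∫ s in Ioc (0:ℝ) 1, 1 / (x + 1) ≤ f x := by
        refine setIntegral_mono_on (hci _) (hgi x) measurableSet_Ioc fun s hs => ?_
        have h : x + s ∈ Ioi w := by simp; linarith [hs.1]
        rw [hg, indicator_of_mem h]
        have := hs.1
        have := hs.2
        gcongr
      simpa using h1
    have hxu : ∀ x, x * f x ≤ (Ici (w - 1)).indicator (fun _ => 1) x := by
      intro x
      by_cases h : x ∈ Ici (w - 1)
      · have h' : w - 1 ≤ x := h
        have hx0 : 0 < x := by linarith
        rw [indicator_of_mem h]
        calc x * f x ≤ x * (1 / x) := by gcongr; exact hfu x h'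
          _ = 1 := by field_simp
      · rw [indicator_of_notMem h, hfz x (by have h2 := h; simp only [mem_Ici, not_le] at h2; exact h2), mul_zero]
    have hxl : ∀ x, (Ici w).indicator (fun _ => 1 - 1 / w) x ≤ x * f x := by
      intro x
      by_cases h : x ∈ Ici w
      · have h' : w ≤ x := h
        have hx0 : 0 < x := by linarith
        rw [indicator_of_mem h]
        calc 1 - 1 / w ≤ 1 - 1 / (x + 1) := by gcongr; linarith
          _ = x * (1 / (x + 1)) := by field_simp; ring
          _ ≤ x * f x := by gcongr; exact hfl x h'
      · rw [indicator_of_notMem h]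
        by_cases h2 : x < w - 1
        · rw [hfz x h2, mul_zero]
        · have : 0 < x := by linarith
          exact mul_nonneg this.le (hf0 x)
    have hfb : ∀ x, ‖f x‖ ≤ 1 / w := by
      intro x
      have := norm_setIntegral_le_of_norm_le_const (μ := volume) (s := Ioc (0:ℝ) 1) (f := fun s => g (x + s)) (C := 1 / w)
        (by simp) (fun s _ => hgb _)
      simpa using this
    have hxi : Integrable (fun x => x * f x) μ :=
      hXint.mul_bdd (c := 1 / w) hfm.aestronglyMeasurable (ae_of_all _ hfb)
    refine ⟨?_, ?_, ?_⟩
    · have h1 := hst g hgm (1 / w) hgb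
      have h2 := hPhi w hw
      have h3 : Φ w = K * -(∫ x, (∫ s, kap Y s * g (x + s)) ∂μ) := by
        rw [hΦ]; simp only; rw [h1]; ring
      rw [h3, ← hKY, mul_assoc K, ← mul_sub, abs_mul, abs_of_pos hK0, mul_assoc K]
      exact mul_le_mul_of_nonneg_left h2 hK0.le
    · have := integral_mono hxi ((integrable_const (1:ℝ)).indicator (measurableSet_Ici (a := w - 1))) hxu
      rw [integral_indicator measurableSet_Ici, setIntegral_const, smul_eq_mul, mul_one] at this
      exact this
    · have := integral_mono ((integrable_const (1 - 1 / w)).indicator (measurableSet_Ici (a := w))) hxi hxl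
      rw [integral_indicator measurableSet_Ici, setIntegral_const, smul_eq_mul, mul_comm] at this
      exact this
  refine ⟨K * A1 + D * 2 ^ Y + C + (4 ^ (Y + 1) + 4 * (C / Y)), by positivity, fun w hw0 => ?_⟩
  have hT1 : μ.real (Ici w) ≤ 1 := measureReal_le_one
  have hT0 : 0 ≤ μ.real (Ici w) := measureReal_nonneg
  have hp : 0 < w ^ (-Y - 1) := by positivity
  have e7 : w ^ (-Y) = w ^ (-Y - 1) * w := by
    rw [← Real.rpow_add_one hw0.ne']; congr 1; ring
  have hCY : 0 < C / Y := by positivity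
  have hT2 : μ.real (Ici w) ≤ D * 2 ^ Y * w ^ (-Y) := by
    have h6 := ht (w / 2) (by linarith)
    have e6 : (w / 2) ^ (-Y) = 2 ^ Y * w ^ (-Y) := by
      rw [Real.div_rpow hw0.le (by norm_num), div_eq_mul_inv, ← Real.rpow_neg (by norm_num), neg_neg]; ring
    rw [e6] at h6
    have h7 : μ.real (Ici w) ≤ μ.real {x | w / 2 < |x|} := by
      refine measureReal_mono fun x hx => ?_
      have : w ≤ x := hx
      have := le_abs_self x
      simp only [mem_setOf_eq]; linarith
    linarith
  have hnn1 : 0 ≤ K * A1 * w ^ (-Y - 1) := by positivity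
  have hnn2 : 0 ≤ D * 2 ^ Y * w ^ (-Y - 1) := by positivity
  have hnn3 : 0 ≤ C * w ^ (-Y - 1) := by positivity
  have hnn4 : 0 ≤ (4 ^ (Y + 1) + 4 * (C / Y)) * w ^ (-Y - 1) := by positivity
  rcases le_total 4 w with hw | hw
  · obtain ⟨h1, -, h3⟩ := hb w hw
    obtain ⟨k1, k2, -⟩ := hb (w + 1) (by linarith)
    rw [add_sub_cancel_right] at k2
    have h1' := (abs_le.1 h1).2
    have k1' := (abs_le.1 k1).1
    have k4 : (w + 1) ^ (-Y - 1) ≤ w ^ (-Y - 1) :=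
      Real.rpow_le_rpow_of_nonpos hw0 (by linarith) (by linarith)
    have k5 := aux_mvt Y w (w + 1) w (by linarith) hw0 (by linarith) le_rfl
    rw [add_sub_cancel_left, abs_one, mul_one] at k5
    have k6 := (abs_le.1 k5).1
    have k7 : C / Y * (w ^ (-Y) - Y * w ^ (-Y - 1)) ≤ C / Y * (w + 1) ^ (-Y) :=
      mul_le_mul_of_nonneg_left (by linarith) hCY.le
    have k8 : C / Y * (w ^ (-Y) - Y * w ^ (-Y - 1)) = C / Y * w ^ (-Y) - C * w ^ (-Y - 1) := by
      field_simp
    have k9 : K * A1 * (w + 1) ^ (-Y - 1) ≤ K * A1 * w ^ (-Y - 1) := by gcongr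
    have h4 : 1 / w * μ.real (Ici w) ≤ D * 2 ^ Y * w ^ (-Y - 1) := by
      calc 1 / w * μ.real (Ici w) ≤ 1 / w * (D * 2 ^ Y * w ^ (-Y)) := by gcongr
        _ = _ := by rw [e7]; field_simp
    rw [abs_le]
    constructor <;> nlinarith
  · have q1 : 1 ≤ 4 ^ (Y + 1) * w ^ (-Y - 1) := by
      rw [show -Y - 1 = -(Y + 1) by ring, Real.rpow_neg hw0.le, ← div_eq_mul_inv, ← Real.div_rpow (by norm_num) hw0.le]
      exact Real.one_le_rpow (by rw [le_div_iff₀ hw0]; linarith) (by linarith)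
    have q2 : C / Y * w ^ (-Y) ≤ 4 * (C / Y) * w ^ (-Y - 1) := by
      rw [e7]
      have : 0 ≤ C / Y * w ^ (-Y - 1) := by positivity
      nlinarith
    have q3 : 0 ≤ C / Y * w ^ (-Y) := by positivity
    rw [abs_le]
    constructor <;> nlinarith

lemma aux_left (μ : Measure ℝ) [IsProbabilityMeasure μ] (Y C D : ℝ) (hY : 1 < Y) (hY2 : Y < 2)
    (hC : 0 < C)
    (hXint : Integrable (fun x : ℝ => x) μ) (hD : 0 ≤ D)
    (ht : ∀ r : ℝ, 0 < r → μ.real {x | r < |x|} ≤ D * r ^ (-Y))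
    (hst : ∀ (g : ℝ → ℝ) (_ : Measurable g) (B : ℝ) (_ : ∀ x, |g x| ≤ B),
      ∫ x, x * (∫ s in Ioc (0:ℝ) 1, g (x + s)) ∂μ =
      - (C / (Y - 1)) * ∫ x, (∫ s, kap Y s * g (x + s)) ∂μ) :
    ∃ A : ℝ, 0 ≤ A ∧ ∀ w : ℝ, 0 < w → μ.real (Iic (-w)) ≤ A * w ^ (-Y - 1) := by
  have hY1 : 0 < Y - 1 := by linarith
  set K := C / (Y - 1) with hK
  have hK0 : 0 < K := by positivity
  set N := ∫ s in Iic (1:ℝ), kpos Y s with hN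
  have hN0 : 0 ≤ N := integral_nonneg fun s => kpos_nonneg _ _
  have hki := kap_integrable Y hY hY2
  have hstep : ∀ w : ℝ, 1 ≤ w → μ.real (Iic (-w - 1)) ≤ K * (N / w * μ.real (Iic (-w))) := by
    intro w hw
    have hw0 : 0 < w := by linarith
    set g := (Iic (-w)).indicator (fun z : ℝ => 1 / z) with hg
    have hgm : Measurable g := Measurable.indicator (by fun_prop) measurableSet_Iic
    have hgneg : ∀ x, g x ≤ 0 := by
      intro x
      refine indicator_nonpos (fun z hz => ?_) x
      have : z ≤ -w := hz
      exact one_div_nonpos.2 (by linarith)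
    have hgb0 : ∀ x, -g x ≤ 1 / w := by
      intro x
      by_cases h : x ∈ Iic (-w)
      · have h' : x ≤ -w := h
        rw [hg, indicator_of_mem h, ← one_div_neg_eq_neg_one_div]
        gcongr; linarith
      · rw [hg, indicator_of_notMem h]; simp; positivity
    have hgb : ∀ x, |g x| ≤ 1 / w := by
      intro x
      rw [abs_of_nonpos (hgneg x)]; exact hgb0 x
    have hgi : ∀ x, IntegrableOn (fun s => g (x + s)) (Ioc (0:ℝ) 1) := by
      intro x
      exact Integrable.of_bound (Measurable.aestronglyMeasurable (by fun_prop)) (1 / w)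
        (ae_of_all _ fun s => hgb _)
    have hci : ∀ c : ℝ, IntegrableOn (fun _ : ℝ => c) (Ioc (0:ℝ) 1) := fun c => by simp
    set f := fun x => ∫ s in Ioc (0:ℝ) 1, g (x + s) with hf
    have hfm : Measurable f := aux_meas' g hgm
    have hf0 : ∀ x, f x ≤ 0 := fun x => integral_nonpos fun s => hgneg _
    have hfz : ∀ x, 0 ≤ x → f x = 0 := by
      intro x hx
      rw [hf]
      refine setIntegral_eq_zero_of_forall_eq_zero fun s hs => ?_
      refine indicator_of_notMem ?_ _
      simp only [mem_Iic, not_le]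
      linarith [hs.1]
    have hfu : ∀ x, x ≤ -w - 1 → f x ≤ 1 / x := by
      intro x hx
      have h1 : f x ≤ ∫ s in Ioc (0:ℝ) 1, 1 / x := by
        refine setIntegral_mono_on (hgi x) (hci _) measurableSet_Ioc fun s hs => ?_
        have h : x + s ∈ Iic (-w) := by simp only [mem_Iic]; linarith [hs.2]
        have h' : x + s ≤ -w := h
        rw [hg, indicator_of_mem h]
        exact one_div_le_one_div_of_neg_of_le (by linarith) (by linarith [hs.1])
      simpa using h1
    have hxl : ∀ x, (Iic (-w - 1)).indicator (fun _ => (1:ℝ)) x ≤ x * f x := by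
      intro x
      by_cases h : x ∈ Iic (-w - 1)
      · have h' : x ≤ -w - 1 := h
        have hx0 : x < 0 := by linarith
        rw [indicator_of_mem h]
        calc (1:ℝ) = x * (1 / x) := by rw [mul_one_div, div_self hx0.ne]
          _ ≤ x * f x := mul_le_mul_of_nonpos_left (hfu x h') hx0.le
      · rw [indicator_of_notMem h]
        rcases le_total 0 x with h2 | h2
        · rw [hfz x h2, mul_zero]
        · exact mul_nonneg_of_nonpos_of_nonpos h2 (hf0 x)
    have hfb : ∀ x, ‖f x‖ ≤ 1 / w := by
      intro x
      have := norm_setIntegral_le_of_norm_le_const (μ := volume) (s := Ioc (0:ℝ) 1) (f := fun s => g (x + s)) (C := 1 / w)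
        (by simp) (fun s _ => hgb _)
      simpa using this
    have hxi : Integrable (fun x => x * f x) μ :=
      hXint.mul_bdd (c := 1 / w) hfm.aestronglyMeasurable (ae_of_all _ hfb)
    have h1 := integral_mono ((integrable_const (1:ℝ)).indicator (measurableSet_Iic (a := -w - 1))) hxi hxl
    rw [integral_indicator measurableSet_Iic, setIntegral_const, smul_eq_mul, mul_one, hst g hgm (1 / w) hgb] at h1
    refine h1.trans ?_
    rw [neg_mul, ← mul_neg, ← integral_neg]
    refine mul_le_mul_of_nonneg_left ?_ hK0.le
    set J := fun x => ∫ s, kap Y s * g (x + s) with hJ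
    have hJm : Measurable J := aux_meas g hgm (kap Y) (by fun_prop) volume
    have hgi2 : ∀ x, Integrable (fun s => kap Y s * g (x + s)) := fun x =>
      hki.mul_bdd (c := 1 / w) (Measurable.aestronglyMeasurable (by fun_prop)) (ae_of_all _ fun s => hgb _)
    have hJb : ∀ x, ‖J x‖ ≤ (∫ s, |kap Y s|) * (1 / w) := by
      intro x
      have h1 := norm_integral_le_of_norm_le (f := fun s => kap Y s * g (x + s)) (hki.abs.mul_const (1 / w))
        (ae_of_all _ fun s => by
          rw [norm_mul, Real.norm_eq_abs, Real.norm_eq_abs]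
          exact mul_le_mul_of_nonneg_left (hgb _) (abs_nonneg _))
      rwa [integral_mul_const] at h1
    have hJi : Integrable J μ := Integrable.of_bound hJm.aestronglyMeasurable _ (ae_of_all _ hJb)
    have hpt : ∀ x, -J x ≤ (Iic (-w)).indicator (fun _ => N / w) x := by
      intro x
      have hkI : Integrable ((Iic (1:ℝ)).indicator (kpos Y)) :=
        (integrable_indicator_iff measurableSet_Iic).2 (kpos_integrableOn Y 1 hY2)
      set q := (Iic (-w)).indicator (fun _ => 1 / w) x with hq
      have hq0 : 0 ≤ q := indicator_nonneg (fun _ _ => by positivity) _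
      have h2 : -J x ≤ ∫ s, (Iic (1:ℝ)).indicator (kpos Y) s * q := by
        rw [hJ, ← integral_neg]
        refine integral_mono (hgi2 x).fun_neg (hkI.mul_const _) fun s => ?_
        simp only
        by_cases h : s ∈ Iic (1:ℝ)
        · have h' : s ≤ 1 := h
          rw [indicator_of_mem h]
          rcases le_or_gt s 0 with hs | hs
          · rw [kap_of_nonpos Y hs, kpos_of_nonpos Y hs]; simp
          · have : kap Y s = kpos Y s := by
              unfold kap; rw [kpos_of_nonpos Y (by linarith : s - 1 ≤ 0), sub_zero]
            rw [this, ← mul_neg]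
            refine mul_le_mul_of_nonneg_left ?_ (kpos_nonneg _ _)
            by_cases hx : x ∈ Iic (-w)
            · rw [hq, indicator_of_mem hx]; exact hgb0 _
            · rw [hq, indicator_of_notMem hx, hg, indicator_of_notMem]
              · simp
              · simp only [mem_Iic, not_le] at hx ⊢; linarith
        · have h' : 1 < s := by simpa using h
          rw [indicator_of_notMem h, zero_mul, ← neg_mul]
          have := kap_nonpos Y s hY h'
          exact mul_nonpos_of_nonneg_of_nonpos (by linarith) (hgneg _)
      rw [integral_mul_const, integral_indicator measurableSet_Iic] at h2
      refine h2.trans (le_of_eq ?_)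
      rw [hq]
      by_cases hx : x ∈ Iic (-w)
      · rw [indicator_of_mem hx, indicator_of_mem hx]; ring
      · rw [indicator_of_notMem hx, indicator_of_notMem hx]; ring
    have h3 := integral_mono hJi.fun_neg ((integrable_const (N / w)).indicator (measurableSet_Iic (a := -w))) hpt
    rw [integral_indicator measurableSet_Iic, setIntegral_const, smul_eq_mul, mul_comm] at h3
    exact h3
  refine ⟨K * N * (D * 2 ^ Y) * 2 ^ (Y + 1) + 2 ^ (Y + 1), by positivity, fun v hv => ?_⟩
  have hp : 0 < v ^ (-Y - 1) := by positivity
  have e1 : ∀ t : ℝ, 2 ^ (Y + 1) * v ^ (-Y - 1) = (v / 2) ^ (-Y - 1) := by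
    intro t
    rw [Real.div_rpow hv.le (by norm_num), div_eq_mul_inv, ← Real.rpow_neg (by norm_num),
      show -(-Y - 1) = Y + 1 by ring]; ring
  rcases le_total 2 v with h | h
  · have h1 := hstep (v - 1) (by linarith)
    rw [show -(v - 1) - 1 = -v by ring] at h1
    have hw0 : 0 < v - 1 := by linarith
    have h6 := ht ((v - 1) / 2) (by linarith)
    have e6 : ((v - 1) / 2) ^ (-Y) = 2 ^ Y * (v - 1) ^ (-Y) := by
      rw [Real.div_rpow hw0.le (by norm_num), div_eq_mul_inv, ← Real.rpow_neg (by norm_num), neg_neg]; ring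
    rw [e6] at h6
    have h7 : μ.real (Iic (-(v - 1))) ≤ μ.real {x | (v - 1) / 2 < |x|} := by
      refine measureReal_mono fun x hx => ?_
      have : x ≤ -(v - 1) := hx
      have := neg_abs_le x
      simp only [mem_setOf_eq]; linarith
    have e7 : (v - 1) ^ (-Y - 1) = (v - 1) ^ (-Y) / (v - 1) := Real.rpow_sub_one hw0.ne' _
    have e8 : (v - 1) ^ (-Y - 1) ≤ (v / 2) ^ (-Y - 1) :=
      Real.rpow_le_rpow_of_nonpos (by linarith) (by linarith) (by linarith)
    calc μ.real (Iic (-v)) ≤ K * (N / (v - 1) * μ.real (Iic (-(v - 1)))) := h1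
      _ ≤ K * (N / (v - 1) * (D * (2 ^ Y * (v - 1) ^ (-Y)))) := by gcongr; linarith
      _ = K * N * (D * 2 ^ Y) * (v - 1) ^ (-Y - 1) := by rw [e7]; field_simp
      _ ≤ K * N * (D * 2 ^ Y) * (v / 2) ^ (-Y - 1) := by gcongr
      _ = K * N * (D * 2 ^ Y) * 2 ^ (Y + 1) * v ^ (-Y - 1) := by rw [← e1 0]; ring
      _ ≤ _ := by gcongr; linarith [show (0:ℝ) < 2 ^ (Y + 1) by positivity]
  · have h1 : μ.real (Iic (-v)) ≤ 1 := measureReal_le_one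
    have h2 : 1 ≤ (v / 2) ^ (-Y - 1) :=
      Real.one_le_rpow_of_pos_of_le_one_of_nonpos (by linarith) (by linarith) (by linarith)
    rw [← e1 0] at h2
    have : 0 ≤ K * N * (D * 2 ^ Y) * 2 ^ (Y + 1) * v ^ (-Y - 1) := by positivity
    linarith

lemma aux_bundle {Ω : Type} [MeasurableSpace Ω] (P : Measure Ω) [IsProbabilityMeasure P]
    (Y C : ℝ) (hY : 1 < Y) (hY2 : Y < 2) (hC : 0 < C) (U : Ω → ℝ) (hU : Measurable U)
    (hUchar : ∀ u : ℝ, (∫ ω, Complex.exp (Complex.I * u * (U ω)) ∂P) =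
      Complex.exp (((C * Real.Gamma (-Y) * |u| ^ Y : ℝ) : ℂ) *
        (((Real.cos (Real.pi * Y / 2) : ℝ) : ℂ)
          - Complex.I * ((Real.sign u : ℝ) : ℂ) * ((Real.sin (Real.pi * Y / 2) : ℝ) : ℂ)))) :
    Integrable (fun x : ℝ => x) (P.map U) ∧ ∃ A : ℝ, 0 ≤ A ∧ ∀ w : ℝ, 0 < w →
      |(P.map U).real (Ici w) - C / Y * w ^ (-Y)| ≤ A * w ^ (-Y - 1) ∧
      (P.map U).real (Iic (-w)) ≤ A * w ^ (-Y - 1) := by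
  have : IsProbabilityMeasure (P.map U) := Measure.isProbabilityMeasure_map hU.aemeasurable
  have hφ : ∀ u : ℝ, charFun (P.map U) u = Complex.exp (((C * Real.Gamma (-Y) * |u| ^ Y : ℝ) : ℂ) *
        (((Real.cos (Real.pi * Y / 2) : ℝ) : ℂ)
          - Complex.I * ((Real.sign u : ℝ) : ℂ) * ((Real.sin (Real.pi * Y / 2) : ℝ) : ℂ))) := by
    intro u
    rw [← hUchar u, charFun_apply_real, integral_map hU.aemeasurable (by fun_prop)]
    refine integral_congr_ae (Eventually.of_forall fun ω => ?_)
    show Complex.exp _ = Complex.exp _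
    congr 1
    ring
  have hb := aux_charFun_bound (P.map U) Y _ _ _ hφ
  have ht := aux_tail (P.map U) Y _ hY (by positivity) hb
  have hXint := aux_integrable (P.map U) Y _ hY ht
  have hst := aux_stein (P.map U) Y C hY hY2 hXint hφ
  obtain ⟨A, hA, h1⟩ := aux_right (P.map U) Y C _ hY hY2 hC hXint (by positivity) ht hst
  obtain ⟨B, hB, h2⟩ := aux_left (P.map U) Y C _ hY hY2 hC hXint (by positivity) ht hst
  refine ⟨hXint, max A B, le_max_of_le_left hA, fun w hw => ⟨(h1 w hw).trans ?_, (h2 w hw).trans ?_⟩⟩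
  · gcongr
    exact le_max_left _ _
  · gcongr
    exact le_max_right _ _

lemma aux_lin {Ω : Type} [MeasurableSpace Ω] (P : Measure Ω) [IsProbabilityMeasure P]
    (Y C : ℝ) (hY : 1 < Y) (hC : 0 < C) (U V : Ω → ℝ) (hU : Measurable U)
    (hV : Measurable V) (hIndep : IndepFun U V P)
    (hXint : Integrable (fun x : ℝ => x) (P.map V)) (A : ℝ) (hA : 0 ≤ A)
    (hT : ∀ w : ℝ, 0 < w → |(P.map U).real (Ici w) - C / Y * w ^ (-Y)| ≤ A * w ^ (-Y - 1))
    (a b δ : ℝ) (ha : 0 < a) (hb : 0 ≤ b) (hδ : 0 < δ) (hbδ : b * δ ≤ 1 / 2) :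
    ∃ A' : ℝ, 0 ≤ A' ∧ ∀ w : ℝ, 0 < w →
      |P.real {ω | w ≤ a * U ω + b * V ω ∧ |V ω| ≤ δ * w} - C / Y * a ^ Y * w ^ (-Y)|
        ≤ A' * w ^ (-Y - 1) := by
  have : IsProbabilityMeasure (P.map U) := Measure.isProbabilityMeasure_map hU.aemeasurable
  have : IsProbabilityMeasure (P.map V) := Measure.isProbabilityMeasure_map hV.aemeasurable
  set μ := P.map U with hμ
  set ν := P.map V with hν
  set κ : ℝ := (1 / (2 * a)) ^ (-Y - 1) with hκ
  have hκ0 : 0 ≤ κ := by positivity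
  have hY0 : 0 < Y := by linarith
  set c2 : ℝ := C * κ * b / a + C / Y * a ^ Y / δ with hc2
  have hc20 : 0 ≤ c2 := by positivity
  have hbi : Integrable (fun v : ℝ => A * κ + c2 * |v|) ν :=
    (integrable_const _).add (hXint.abs.const_mul c2)
  refine ⟨∫ v, (A * κ + c2 * |v|) ∂ν, integral_nonneg fun v => by positivity, fun w hw => ?_⟩
  set S : Set (ℝ × ℝ) := {p | w ≤ a * p.1 + b * p.2 ∧ |p.2| ≤ δ * w} with hS
  have hSm : MeasurableSet S := by
    have m1 : Measurable (fun p : ℝ × ℝ => a * p.1 + b * p.2) := by fun_prop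
    have m2 : Measurable (fun p : ℝ × ℝ => |p.2|) := by fun_prop
    exact (measurableSet_le measurable_const m1).inter (measurableSet_le m2 measurable_const)
  have hprod : P.map (fun ω => (U ω, V ω)) = μ.prod ν :=
    (indepFun_iff_map_prod_eq_prod_map_map hU.aemeasurable hV.aemeasurable).1 hIndep
  have h1 : P.real {ω | w ≤ a * U ω + b * V ω ∧ |V ω| ≤ δ * w} = (μ.prod ν).real S := by
    rw [← hprod, measureReal_def, measureReal_def, Measure.map_apply (by fun_prop) hSm]
    rfl
  set f : ℝ → ℝ := fun v => μ.real ((fun x => (x, v)) ⁻¹' S) with hf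
  have hfm : Measurable f := (measurable_measure_prodMk_right hSm).ennreal_toReal
  have hfi : Integrable f ν := by
    refine Integrable.of_bound hfm.aestronglyMeasurable 1 (Eventually.of_forall fun v => ?_)
    rw [Real.norm_eq_abs, abs_of_nonneg measureReal_nonneg]
    exact measureReal_le_one
  have h2 : (μ.prod ν).real S = ∫ v, f v ∂ν := by
    rw [measureReal_def, Measure.prod_apply_symm hSm, ← integral_toReal]
    · rfl
    · exact (measurable_measure_prodMk_right hSm).aemeasurable
    · exact Eventually.of_forall fun v => measure_lt_top _ _
  have hc : C / Y * a ^ Y * w ^ (-Y) = ∫ v, C / Y * a ^ Y * w ^ (-Y) ∂ν := by simp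
  rw [h1, h2, hc, ← integral_sub hfi (integrable_const _), ← integral_mul_const, ← Real.norm_eq_abs]
  refine norm_integral_le_of_norm_le (hbi.mul_const _) (Eventually.of_forall fun v => ?_)
  rw [Real.norm_eq_abs]
  have hww : w ^ (-Y) = w * w ^ (-Y - 1) := by
    rw [← Real.rpow_one_add' hw.le (by linarith)]; congr 1; ring
  by_cases hv : |v| ≤ δ * w
  · set s := (w - b * v) / a with hs
    have hbv : b * |v| ≤ w / 2 := by nlinarith
    have hbv' : b * v ≤ w / 2 := by nlinarith [le_abs_self v]
    have hm : w / (2 * a) ≤ s := by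
      rw [hs, div_le_div_iff₀ (by positivity) ha]; nlinarith
    have hm0 : 0 < w / (2 * a) := by positivity
    have hs0 : 0 < s := hm0.trans_le hm
    have hfv : f v = μ.real (Ici s) := by
      rw [hf]
      show μ.real _ = _
      congr 1
      ext x
      simp only [hS, mem_preimage, mem_Ici, hs, div_le_iff₀ ha]
      constructor
      · rintro ⟨h, -⟩; linarith
      · intro h; exact ⟨by linarith, hv⟩
    have hmk : (w / (2 * a)) ^ (-Y - 1) = κ * w ^ (-Y - 1) := by
      rw [hκ, ← Real.mul_rpow (by positivity) hw.le]; congr 1; ring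
    have e1 : |μ.real (Ici s) - C / Y * s ^ (-Y)| ≤ A * (κ * w ^ (-Y - 1)) := by
      refine (hT s hs0).trans ?_
      rw [← hmk]
      exact mul_le_mul_of_nonneg_left
        (Real.rpow_le_rpow_of_nonpos hm0 hm (by linarith)) hA
    have e2 : |s ^ (-Y) - (w / a) ^ (-Y)| ≤ Y * (κ * w ^ (-Y - 1)) * (b * |v| / a) := by
      have := aux_mvt Y (w / (2 * a)) s (w / a) hY0 hm0 hm (by
        apply div_le_div_of_nonneg_left hw.le ha; linarith)
      rw [hmk] at this
      have e : |s - w / a| = b * |v| / a := by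
        rw [hs, ← sub_div, abs_div, abs_of_pos ha, sub_sub_cancel_left, abs_neg, abs_mul, abs_of_nonneg hb]
      rwa [e] at this
    have e3 : (w / a) ^ (-Y) = a ^ Y * w ^ (-Y) := by
      rw [Real.div_rpow hw.le ha.le, Real.rpow_neg ha.le, div_inv_eq_mul, mul_comm]
    rw [e3] at e2
    have e4 : f v - C / Y * a ^ Y * w ^ (-Y) = (μ.real (Ici s) - C / Y * s ^ (-Y))
        + C / Y * (s ^ (-Y) - a ^ Y * w ^ (-Y)) := by rw [hfv]; ring
    rw [e4]
    refine (abs_add_le _ _).trans ?_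
    rw [abs_mul, abs_of_pos (show 0 < C / Y by positivity)]
    have e5 := mul_le_mul_of_nonneg_left e2 (show 0 ≤ C / Y by positivity)
    have e6 : C / Y * (Y * (κ * w ^ (-Y - 1)) * (b * |v| / a)) = C * κ * b / a * |v| * w ^ (-Y - 1) := by
      field_simp
    have e7 : 0 ≤ C / Y * a ^ Y / δ * |v| * w ^ (-Y - 1) := by positivity
    rw [hc2]
    nlinarith
  · push Not at hv
    have hfv : f v = 0 := by
      have : (fun x => (x, v)) ⁻¹' S = (∅ : Set ℝ) := by
        ext x
        simp only [hS, mem_preimage, mem_empty_iff_false, iff_false]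
        rintro ⟨-, h⟩
        exact absurd h (not_le.2 hv)
      rw [hf]
      show μ.real _ = _
      rw [this, measureReal_empty]
    have hp : 0 < w ^ (-Y - 1) := by positivity
    rw [hfv, zero_sub, abs_neg, abs_of_nonneg (by positivity), hww]
    have hwv : w ≤ |v| / δ := by rw [le_div_iff₀ hδ]; linarith
    have e1 : C / Y * a ^ Y * (w * w ^ (-Y - 1)) ≤ C / Y * a ^ Y * (|v| / δ * w ^ (-Y - 1)) := by gcongr
    have e2 : C / Y * a ^ Y * (|v| / δ * w ^ (-Y - 1)) = C / Y * a ^ Y / δ * |v| * w ^ (-Y - 1) := by ring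
    have e3 : 0 ≤ (A * κ + C * κ * b / a * |v|) * w ^ (-Y - 1) := by positivity
    rw [hc2]
    linarith

lemma aux_main {Ω : Type} [MeasurableSpace Ω] (P : Measure Ω) [IsProbabilityMeasure P]
    (Y C M G : ℝ) (hY : 1 < Y) (hY2 : Y < 2) (hC : 0 < C) (hM : 1 < M) (hG : 0 < G)
    (U V : Ω → ℝ) (hU : Measurable U) (hV : Measurable V) (hIndep : IndepFun U V P)
    (hintU : Integrable (fun x : ℝ => x) (P.map U)) (hintV : Integrable (fun x : ℝ => x) (P.map V))
    (A : ℝ) (hA : 0 ≤ A)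
    (hTU : ∀ w : ℝ, 0 < w → |(P.map U).real (Ici w) - C / Y * w ^ (-Y)| ≤ A * w ^ (-Y - 1) ∧
      (P.map U).real (Iic (-w)) ≤ A * w ^ (-Y - 1))
    (B : ℝ) (hB : 0 ≤ B)
    (hTV : ∀ w : ℝ, 0 < w → |(P.map V).real (Ici w) - C / Y * w ^ (-Y)| ≤ B * w ^ (-Y - 1) ∧
      (P.map V).real (Iic (-w)) ≤ B * w ^ (-Y - 1)) :
    ∃ A' : ℝ, 0 ≤ A' ∧ ∀ w : ℝ, 1 ≤ w →
      |P.real {ω | w ≤ max (U ω - V ω) 0 + ((M - 1) * U ω + (G + 1) * V ω)}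
        - C / Y * M ^ Y * w ^ (-Y) - C / Y * (G + 1) ^ Y * w ^ (-Y)| ≤ A' * w ^ (-Y - 1) := by
  have hY0 : 0 < Y := by linarith
  have hM0 : 0 < M - 1 := by linarith
  have hMG : 0 < M + G + 1 := by linarith
  set δ : ℝ := 1 / (2 * (M + G + 1)) with hδ
  have hδ0 : 0 < δ := by positivity
  have hδe : (M + G + 1) * δ = 1 / 2 := by rw [hδ]; field_simp
  obtain ⟨A1, hA1, h1⟩ := aux_lin P Y C hY hC U V hU hV hIndep hintV A hA
    (fun w hw => (hTU w hw).1) M G δ (by linarith) hG.le hδ0 (by nlinarith)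
  obtain ⟨A2, hA2, h2⟩ := aux_lin P Y C hY hC V U hV hU hIndep.symm hintU B hB
    (fun w hw => (hTV w hw).1) (G + 1) (M - 1) δ (by linarith) (by linarith) hδ0 (by nlinarith)
  set κ : ℝ := δ ^ (-Y - 1) with hκ
  have hκ0 : 0 ≤ κ := by positivity
  set L : ℝ := (C / Y * δ ^ (-Y) + A * κ) * (C / Y * δ ^ (-Y) + B * κ) with hL
  have hL0 : 0 ≤ L := by positivity
  refine ⟨A1 + A2 + L + A * κ + B * κ, by positivity, fun w hw => ?_⟩
  have hw0 : 0 < w := by linarith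
  have hdw : 0 < δ * w := by positivity
  set E1 : Set Ω := {ω | w ≤ M * U ω + G * V ω ∧ |V ω| ≤ δ * w} with hE1
  set E2 : Set Ω := {ω | w ≤ (G + 1) * V ω + (M - 1) * U ω ∧ |U ω| ≤ δ * w} with hE2
  set X : Set Ω := {ω | w ≤ max (U ω - V ω) 0 + ((M - 1) * U ω + (G + 1) * V ω)} with hX
  have hE2m : MeasurableSet E2 := by
    have m1 : Measurable (fun ω => (G + 1) * V ω + (M - 1) * U ω) := by fun_prop
    have m2 : Measurable (fun ω => |U ω|) := by fun_prop
    exact (measurableSet_le measurable_const m1).inter (measurableSet_le m2 measurable_const)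
  have hdisj : Disjoint E1 E2 := by
    rw [Set.disjoint_left]
    rintro ω ⟨ha, hb⟩ ⟨-, hd⟩
    have e1 := (le_abs_self (U ω)).trans hd
    have e2 := (le_abs_self (V ω)).trans hb
    nlinarith
  have hsub1 : E1 ∪ E2 ⊆ X := by
    rintro ω (⟨ha, -⟩ | ⟨ha, -⟩)
    · show w ≤ _
      linarith [le_max_left (U ω - V ω) 0]
    · show w ≤ _
      linarith [le_max_right (U ω - V ω) 0]
  set F1 : Set Ω := U ⁻¹' (Ici (δ * w)) ∩ V ⁻¹' (Ici (δ * w)) with hF1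
  set F2 : Set Ω := U ⁻¹' (Iic (-(δ * w))) with hF2
  set F3 : Set Ω := V ⁻¹' (Iic (-(δ * w))) with hF3
  have hsub2 : X ⊆ (E1 ∪ E2) ∪ F1 ∪ F2 ∪ F3 := by
    intro ω hω
    have hω' : w ≤ max (U ω - V ω) 0 + ((M - 1) * U ω + (G + 1) * V ω) := hω
    by_cases f2 : U ω ≤ -(δ * w)
    · exact Or.inl (Or.inr f2)
    by_cases f3 : V ω ≤ -(δ * w)
    · exact Or.inr f3
    by_cases u1 : δ * w ≤ U ω
    · by_cases v1 : δ * w ≤ V ω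
      · exact Or.inl (Or.inl (Or.inr ⟨u1, v1⟩))
      · push Not at v1 f2 f3
        refine Or.inl (Or.inl (Or.inl (Or.inl ⟨?_, abs_le.2 ⟨f3.le, v1.le⟩⟩)))
        rw [max_eq_left (by linarith)] at hω'
        linarith
    · push Not at u1 f2 f3
      by_cases v1 : δ * w ≤ V ω
      · refine Or.inl (Or.inl (Or.inl (Or.inr ⟨?_, abs_le.2 ⟨f2.le, u1.le⟩⟩)))
        rw [max_eq_right (by linarith)] at hω'
        linarith
      · push Not at v1
        exfalso
        rcases max_cases (U ω - V ω) 0 with ⟨h, -⟩ | ⟨h, -⟩ <;> rw [h] at hω' <;> nlinarith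
  have hun : P.real (E1 ∪ E2) = P.real E1 + P.real E2 := measureReal_union hdisj hE2m
  have hle1 : P.real E1 + P.real E2 ≤ P.real X := by
    rw [← hun]; exact measureReal_mono hsub1
  have hle2 : P.real X ≤ P.real E1 + P.real E2 + P.real F1 + P.real F2 + P.real F3 := by
    rw [← hun]
    refine (measureReal_mono hsub2).trans ?_
    refine (measureReal_union_le _ _).trans (add_le_add_left ?_ _)
    refine (measureReal_union_le _ _).trans (add_le_add_left ?_ _)
    exact measureReal_union_le _ _
  have hmapU : ∀ s : Set ℝ, MeasurableSet s → P.real (U ⁻¹' s) = (P.map U).real s := fun s hs => by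
    rw [measureReal_def, measureReal_def, Measure.map_apply hU hs]
  have hmapV : ∀ s : Set ℝ, MeasurableSet s → P.real (V ⁻¹' s) = (P.map V).real s := fun s hs => by
    rw [measureReal_def, measureReal_def, Measure.map_apply hV hs]
  have hk1 : (δ * w) ^ (-Y - 1) = κ * w ^ (-Y - 1) := Real.mul_rpow hδ0.le hw0.le
  have hk2 : (δ * w) ^ (-Y) = δ ^ (-Y) * w ^ (-Y) := Real.mul_rpow hδ0.le hw0.le
  have hF2le : P.real F2 ≤ A * κ * w ^ (-Y - 1) := by
    rw [hF2, hmapU _ measurableSet_Iic]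
    have := (hTU _ hdw).2
    rw [hk1] at this
    linarith
  have hF3le : P.real F3 ≤ B * κ * w ^ (-Y - 1) := by
    rw [hF3, hmapV _ measurableSet_Iic]
    have := (hTV _ hdw).2
    rw [hk1] at this
    linarith
  have hww : w ^ (-Y - 1) ≤ w ^ (-Y) := Real.rpow_le_rpow_of_exponent_le hw (by linarith)
  have hUt : P.real (U ⁻¹' (Ici (δ * w))) ≤ (C / Y * δ ^ (-Y) + A * κ) * w ^ (-Y) := by
    rw [hmapU _ measurableSet_Ici]
    have := (abs_le.1 (hTU _ hdw).1).2
    rw [hk1, hk2] at this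
    have h3 := mul_le_mul_of_nonneg_left hww (show 0 ≤ A * κ by positivity)
    linarith
  have hVt : P.real (V ⁻¹' (Ici (δ * w))) ≤ (C / Y * δ ^ (-Y) + B * κ) * w ^ (-Y) := by
    rw [hmapV _ measurableSet_Ici]
    have := (abs_le.1 (hTV _ hdw).1).2
    rw [hk1, hk2] at this
    have h3 := mul_le_mul_of_nonneg_left hww (show 0 ≤ B * κ by positivity)
    linarith
  have hF1le : P.real F1 ≤ L * w ^ (-Y - 1) := by
    have e : P.real F1 = P.real (U ⁻¹' (Ici (δ * w))) * P.real (V ⁻¹' (Ici (δ * w))) := by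
      rw [hF1, measureReal_def, hIndep.measure_inter_preimage_eq_mul _ _ measurableSet_Ici measurableSet_Ici,
        ENNReal.toReal_mul]
      rfl
    rw [e]
    calc _ ≤ ((C / Y * δ ^ (-Y) + A * κ) * w ^ (-Y)) * ((C / Y * δ ^ (-Y) + B * κ) * w ^ (-Y)) :=
          mul_le_mul hUt hVt measureReal_nonneg (by positivity)
      _ = L * (w ^ (-Y) * w ^ (-Y)) := by rw [hL]; ring
      _ ≤ L * w ^ (-Y - 1) := by
          refine mul_le_mul_of_nonneg_left ?_ hL0
          rw [← Real.rpow_add hw0]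
          exact Real.rpow_le_rpow_of_exponent_le hw (by linarith)
  have g1 := abs_le.1 (h1 w hw0)
  have g2 := abs_le.1 (h2 w hw0)
  have hp : 0 ≤ (L + A * κ + B * κ) * w ^ (-Y - 1) := by positivity
  rw [abs_le]
  constructor <;> linarith [g1.1, g1.2, g2.1, g2.2]

theorem stmt6
    {Ω : Type} [MeasurableSpace Ω] (P : Measure Ω) [IsProbabilityMeasure P]
    (Y C M G : ℝ) (hY : Y ∈ Set.Ioo (1:ℝ) 2) (hC : 0 < C) (hM : 1 < M) (hG : 0 < G)
    (U V : Ω → ℝ) (hU : Measurable U) (hV : Measurable V)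
    (hIndep : IndepFun U V P)
    (hUchar : ∀ u : ℝ, (∫ ω, Complex.exp (Complex.I * u * (U ω)) ∂P) =
      Complex.exp (((C * Real.Gamma (-Y) * |u| ^ Y : ℝ) : ℂ) *
        (((Real.cos (Real.pi * Y / 2) : ℝ) : ℂ)
          - Complex.I * ((Real.sign u : ℝ) : ℂ) * ((Real.sin (Real.pi * Y / 2) : ℝ) : ℂ))))
    (hVchar : ∀ u : ℝ, (∫ ω, Complex.exp (Complex.I * u * (V ω)) ∂P) =
      Complex.exp (((C * Real.Gamma (-Y) * |u| ^ Y : ℝ) : ℂ) *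
        (((Real.cos (Real.pi * Y / 2) : ℝ) : ℂ)
          - Complex.I * ((Real.sign u : ℝ) : ℂ) * ((Real.sin (Real.pi * Y / 2) : ℝ) : ℂ))))
    (Z Ut : Ω → ℝ)
    (hZ : Z = fun ω => U ω - V ω)
    (hUt : Ut = fun ω => (M - 1) * U ω + (G + 1) * V ω) :
    IntegrableOn
      (fun w => w * ((P {ω | w ≤ max (Z ω) 0 + Ut ω}).toReal
        - C * M ^ Y / (Y * w ^ Y) - C * (G+1) ^ Y / (Y * w ^ Y)))
      (Set.Ioi 0) := by
  obtain ⟨hY1, hY2⟩ := hY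
  obtain ⟨hintU, A, hA, hTU⟩ := aux_bundle P Y C hY1 hY2 hC U hU hUchar
  obtain ⟨hintV, B, hB, hTV⟩ := aux_bundle P Y C hY1 hY2 hC V hV hVchar
  obtain ⟨K, hK, hmain⟩ := aux_main P Y C M G hY1 hY2 hC hM hG U V hU hV hIndep hintU hintV
    A hA hTU B hB hTV
  have hY0 : 0 < Y := by linarith
  subst hZ hUt
  set T : ℝ → ℝ := fun w =>
    P.real {ω | w ≤ max (U ω - V ω) 0 + ((M - 1) * U ω + (G + 1) * V ω)} with hT
  have hTanti : Antitone T := by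
    intro x y hxy
    exact measureReal_mono (fun ω hω => hxy.trans hω)
  have hTm : Measurable T := hTanti.measurable
  set c1 : ℝ := C / Y * M ^ Y with hc1
  set c2 : ℝ := C / Y * (G + 1) ^ Y with hc2
  have hc10 : 0 ≤ c1 := by positivity
  have hc20 : 0 ≤ c2 := by positivity
  have hmeas : Measurable (fun w : ℝ => w * (T w - c1 * w ^ (-Y) - c2 * w ^ (-Y))) := by
    fun_prop
  have key : IntegrableOn (fun w : ℝ => w * (T w - c1 * w ^ (-Y) - c2 * w ^ (-Y))) (Ioi 0) := by
    rw [← Ioc_union_Ioi_eq_Ioi (zero_le_one (α := ℝ))]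
    refine IntegrableOn.union ?_ ?_
    · have hb : IntegrableOn (fun w : ℝ => 1 + (c1 + c2) * w ^ (1 - Y)) (Ioc 0 1) := by
        refine (integrable_const _).add (Integrable.const_mul ?_ _)
        exact (intervalIntegrable_iff_integrableOn_Ioc_of_le zero_le_one).1
          (intervalIntegral.intervalIntegrable_rpow' (by linarith))
      refine Integrable.mono' hb hmeas.aestronglyMeasurable ?_
      refine (ae_restrict_mem measurableSet_Ioc).mono fun w hw => ?_
      have hw0 : 0 < w := hw.1
      have hww : w ^ (1 - Y) = w * w ^ (-Y) := by
        rw [← Real.rpow_one_add' hw0.le (by linarith)]; congr 1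
      have t0 : 0 ≤ T w := measureReal_nonneg
      have t1 : T w ≤ 1 := measureReal_le_one
      have q : 0 ≤ w * w ^ (-Y) := by positivity
      have q1 : 0 ≤ (c1 + c2) * (w * w ^ (-Y)) := by positivity
      have q2 : w * T w ≤ 1 := by nlinarith [hw.2]
      have q3 : 0 ≤ w * T w := by positivity
      rw [Real.norm_eq_abs, hww, abs_le]
      constructor <;> nlinarith
    · have hb : IntegrableOn (fun w : ℝ => K * w ^ (-Y)) (Ioi 1) :=
        (integrableOn_Ioi_rpow_of_lt (by linarith) zero_lt_one).const_mul _
      refine Integrable.mono' hb hmeas.aestronglyMeasurable ?_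
      refine (ae_restrict_mem measurableSet_Ioi).mono fun w hw => ?_
      have hw1 : 1 ≤ w := le_of_lt hw
      have hw0 : 0 < w := by linarith
      have hww : w ^ (-Y) = w * w ^ (-Y - 1) := by
        rw [← Real.rpow_one_add' hw0.le (by linarith)]; congr 1; ring
      have := mul_le_mul_of_nonneg_left (hmain w hw1) hw0.le
      rw [Real.norm_eq_abs, abs_mul, abs_of_pos hw0]
      refine this.trans (le_of_eq ?_)
      rw [hww]; ring
  refine key.congr_fun (fun w hw => ?_) measurableSet_Ioi
  have hw0 : 0 < w := hw
  have hp : w ^ Y ≠ 0 := (Real.rpow_pos_of_pos hw0 Y).ne'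
  have e1 : c1 * w ^ (-Y) = C * M ^ Y / (Y * w ^ Y) := by
    rw [hc1, Real.rpow_neg hw0.le]; field_simp
  have e2 : c2 * w ^ (-Y) = C * (G + 1) ^ Y / (Y * w ^ Y) := by
    rw [hc2, Real.rpow_neg hw0.le]; field_simp
  show w * (T w - c1 * w ^ (-Y) - c2 * w ^ (-Y)) = _
  rw [e1, e2]
  rfl
end
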